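/- arXiv:1808.01922 — 5 statements merged into one kernel-verified Lean document; each statement's English description precedes it below -/
import Mathlib

section
/- Let A be a Hopf algebra over a field k with bijective antipode which is weakly finite (for every n ≥ 1 and all x, y ∈ M_n(A), xy = 1 implies yx = 1). Then for every right group-like projection P ∈ A one has N_P = V_P. -/
open scoped TensorProduct

noncomputable section

variable (k : Type*) [Field k] {A : Type*} [Ring A] [HopfAlgebra k A]

/-- `P` is a right group-like projection: a nonzero idempotent with
`Δ(P)(1 ⊗ P) = P ⊗ P = (1 ⊗ P)Δ(P)`. -/
def IsRightGroupLikeProjection (P : A) : Prop :=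
  P ≠ 0 ∧ P * P = P ∧
    Coalgebra.comul (R := k) P * ((1 : A) ⊗ₜ[k] P) = P ⊗ₜ[k] P ∧
    ((1 : A) ⊗ₜ[k] P) * Coalgebra.comul (R := k) P = P ⊗ₜ[k] P

/-- `P` is a left group-like projection: a nonzero idempotent with
`Δ(P)(P ⊗ 1) = P ⊗ P = (P ⊗ 1)Δ(P)`. -/
def IsLeftGroupLikeProjection (P : A) : Prop :=
  P ≠ 0 ∧ P * P = P ∧
    Coalgebra.comul (R := k) P * (P ⊗ₜ[k] (1 : A)) = P ⊗ₜ[k] P ∧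
    (P ⊗ₜ[k] (1 : A)) * Coalgebra.comul (R := k) P = P ⊗ₜ[k] P

/-- A two-sided group-like projection. -/
def IsTwoSidedGroupLikeProjection (P : A) : Prop :=
  IsRightGroupLikeProjection k P ∧ IsLeftGroupLikeProjection k P

/-- `N_P^l = {x : (1 ⊗ P)Δ(x) = x ⊗ P}`. -/
def NPlSet (P : A) : Set A :=
  {x : A | ((1 : A) ⊗ₜ[k] P) * Coalgebra.comul (R := k) x = x ⊗ₜ[k] P}

/-- `N_P^r = {x : Δ(x)(1 ⊗ P) = x ⊗ P}`. -/
def NPrSet (P : A) : Set A :=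
  {x : A | Coalgebra.comul (R := k) x * ((1 : A) ⊗ₜ[k] P) = x ⊗ₜ[k] P}

/-- `N_P = N_P^l ∩ N_P^r`. -/
def NPSet (P : A) : Set A := NPlSet k P ∩ NPrSet k P

/-- `V_P = {(μ ⊗ id)(Δ(P)) : μ ∈ A*}`, the smallest left coideal containing `P`. -/
def VPSet (P : A) : Set A :=
  {x : A | ∃ μ : A →ₗ[k] k,
    x = TensorProduct.lid k A ((TensorProduct.map μ LinearMap.id) (Coalgebra.comul (R := k) P))}

/-- A submodule `N ⊆ A` is a left coideal if `Δ(N) ⊆ A ⊗ N`. -/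
def IsLeftCoideal (N : Submodule k A) : Prop :=
  ∀ x ∈ N, Coalgebra.comul (R := k) x ∈
    LinearMap.range (TensorProduct.map (LinearMap.id : A →ₗ[k] A) N.subtype)

/-- A subalgebra `N ⊆ A` is a left coideal subalgebra if `Δ(N) ⊆ A ⊗ N`. -/
def IsLeftCoidealSubalgebra (N : Subalgebra k A) : Prop :=
  IsLeftCoideal k (Subalgebra.toSubmodule N)

section ModuleTheory

variable {k}
variable {R E F X Y : Type*} [Ring R] [Algebra k R]
  [AddCommGroup E] [Module k E] [Module R E] [IsScalarTower k R E]
  [AddCommGroup F] [Module k F] [Module R F] [IsScalarTower k R F]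
  [AddCommGroup X] [Module k X] [Module R X] [IsScalarTower k R X]
  [AddCommGroup Y] [Module k Y] [Module R Y] [IsScalarTower k R Y]

variable (k R E F) in
theorem finite_linearMap_of_isScalarTower [Module.Finite k E] [Module.Finite k F] :
    Module.Finite k (E →ₗ[R] F) :=
  Module.Finite.of_injective (LinearMap.restrictScalarsₗ k R E F k)
    (LinearMap.restrictScalars_injective k)

variable (k R Y) in
theorem finrank_linearMap_pi (X : Type*) [AddCommGroup X] [Module R X] (r : ℕ) :
    Module.finrank k ((Fin r → X) →ₗ[R] Y) = r * Module.finrank k (X →ₗ[R] Y) := by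
  rw [← (LinearMap.lsum R (fun _ : Fin r => X) k (M := Y)).finrank_eq]
  by_cases h : Module.Finite k (X →ₗ[R] Y)
  · rw [Module.finrank_pi_fintype]; simp
  · rcases Nat.eq_zero_or_pos r with rfl | hr
    · rw [zero_mul, Module.finrank_zero_of_subsingleton]
    · rw [Module.finrank_of_not_finite h, Module.finrank_of_not_finite, mul_zero]
      intro h'
      exact h (Module.Finite.of_surjective
        (LinearMap.proj (R := k) (φ := fun _ : Fin r => X →ₗ[R] Y) ⟨0, hr⟩)
        (LinearMap.proj_surjective _))

variable (k R Y) in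
theorem finrank_linearMap_pi_self (q : ℕ) [Module.Finite k Y] :
    Module.finrank k ((Fin q → R) →ₗ[R] Y) = q * Module.finrank k Y := by
  rw [← ((Pi.basisFun R (Fin q)).constr k (M' := Y)).finrank_eq, Module.finrank_pi_fintype]
  simp

/-- A semisimple module `F` is a quotient of `E` as soon as no simple submodule of `F` receives
more homomorphisms from `F` than from `E`. -/
theorem exists_surjective_of_finrank_le [Module.Finite k E] [Module.Finite k F]
    [IsSemisimpleModule R F]
    (h : ∀ Y : Submodule R F, IsSimpleModule R Y →
      Module.finrank k (F →ₗ[R] Y) ≤ Module.finrank k (E →ₗ[R] Y)) :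
    ∃ g : E →ₗ[R] F, Function.Surjective g := by
  have : IsNoetherian R F := isNoetherian_of_tower k inferInstance
  obtain ⟨T, ⟨g, rfl⟩, hmax⟩ := set_has_maximal_iff_noetherian.mpr this
    (Set.range fun g : E →ₗ[R] F => LinearMap.range g) ⟨_, 0, rfl⟩
  refine ⟨g, LinearMap.range_eq_top.mp ?_⟩
  by_contra hg
  obtain ⟨C, hC⟩ := exists_isCompl (LinearMap.range g)
  have hCbot : C ≠ ⊥ := by
    rintro rfl
    exact hg (by simpa using hC.sup_eq_top)
  obtain ⟨Y, hYC, hY⟩ := (IsSemisimpleModule.eq_bot_or_exists_simple_le C).resolve_left hCbot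
  have hdisj : Disjoint (LinearMap.range g) Y := hC.disjoint.mono_right hYC
  have hYbot : Y ≠ ⊥ := ((isSimpleModule_iff_isAtom).mp hY).1
  have : Module.Finite k Y := .of_injective (Y.subtype.restrictScalars k) Y.subtype_injective
  have := finite_linearMap_of_isScalarTower k R E Y
  have := finite_linearMap_of_isScalarTower k R F Y
  have hnot : ∃ f : E →ₗ[R] Y, ¬ ∃ f' : F →ₗ[R] Y, f' ∘ₗ g = f := by
    by_contra! hall
    have hsurj : Function.Surjective (LinearMap.lcomp k Y g) := hall
    have hinj : Function.Injective (LinearMap.lcomp k Y g) :=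
      (LinearMap.injective_iff_surjective_of_finrank_eq_finrank
        (le_antisymm (h Y hY) (LinearMap.finrank_le_finrank_of_surjective hsurj))).mpr hsurj
    obtain ⟨p, hp⟩ := IsSemisimpleModule.extension_property Y.subtype Y.subtype_injective
      LinearMap.id
    have hzero : p ∘ₗ C.projection _ hC.symm = 0 := hinj <| by
      ext x
      simp [LinearMap.lcomp_apply, (Submodule.projection_apply_eq_zero_iff hC.symm).mpr
        (LinearMap.mem_range_self g x)]
    obtain ⟨y, hy, hy0⟩ := Y.ne_bot_iff.mp hYbot
    have h1 := LinearMap.congr_fun hzero y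
    have h2 := LinearMap.congr_fun hp ⟨y, hy⟩
    rw [LinearMap.comp_apply, Submodule.projection_apply_of_mem_left _ (hYC hy)] at h1
    exact hy0 (congrArg Subtype.val (h2.symm.trans h1))
  obtain ⟨f, hf⟩ := hnot
  have hker : ∃ x ∈ LinearMap.ker g, f x ≠ 0 := by
    by_contra! hall
    obtain ⟨f', hf'⟩ := IsSemisimpleModule.extension_property (LinearMap.range g).subtype
      (Submodule.subtype_injective _)
      ((LinearMap.ker g).liftQ f hall ∘ₗ g.quotKerEquivRange.symm.toLinearMap)
    refine hf ⟨f', LinearMap.ext fun x => ?_⟩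
    have := LinearMap.congr_fun hf' ⟨g x, LinearMap.mem_range_self g x⟩
    simp only [LinearMap.comp_apply, Submodule.subtype_apply, LinearEquiv.coe_coe,
      LinearMap.quotKerEquivRange_symm_apply_image] at this
    exact this
  obtain ⟨x₀, hx₀, hfx₀⟩ := hker
  have hYle : Y ≤ LinearMap.range (g + Y.subtype ∘ₗ f) := by
    intro y hy
    obtain ⟨c, hc⟩ := IsSimpleModule.toSpanSingleton_surjective R hfx₀ ⟨y, hy⟩
    refine ⟨c • x₀, ?_⟩
    have hc' : c • f x₀ = ⟨y, hy⟩ := hc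
    simp [LinearMap.mem_ker.mp hx₀, ← Submodule.coe_smul, hc']
  refine hmax _ ⟨g + Y.subtype ∘ₗ f, rfl⟩ (lt_of_le_of_ne ?_ ?_)
  · rintro _ ⟨x, rfl⟩
    have := Submodule.sub_mem _ (LinearMap.mem_range_self (g + Y.subtype ∘ₗ f) x) (hYle (f x).2)
    simpa using this
  · intro heq
    exact hYbot (disjoint_self.mp (hdisj.mono_left (hYle.trans heq.ge)))

theorem finrank_linearMap_le_of_injective [Module.Finite k X] [Module.Finite k F]
    (f : E →ₗ[R] F) (hf : Function.Injective f) :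
    Module.finrank k (X →ₗ[R] E) ≤ Module.finrank k (X →ₗ[R] F) :=
  have := finite_linearMap_of_isScalarTower k R X F
  LinearMap.finrank_le_finrank_of_injective (f := LinearMap.compRight k (M := X) f)
    fun _ _ hab => LinearMap.ext fun x => hf (LinearMap.congr_fun hab x)

variable (k R X) in
/-- Some power `X ^ r` of a nonzero finite-dimensional semisimple module is generated by `q`
elements which behave like a basis with respect to a simple submodule `Y`. -/
theorem IsSemisimpleModule.exists_generators_relatively_free [Module.Finite k R]
    [Module.Finite k X] [Nontrivial X] [IsSemisimpleModule R X] :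
    ∃ (q r : ℕ) (Y : Submodule R X) (g : (Fin q → R) →ₗ[R] (Fin r → X)),
      0 < q ∧ Nontrivial Y ∧ Function.Surjective g ∧
      ∀ f : (Fin q → R) →ₗ[R] Y, ∃ φ : (Fin r → X) →ₗ[R] Y, φ ∘ₗ g = f := by
  have hfin (Y : Submodule R X) : Module.Finite k Y :=
    .of_injective (Y.subtype.restrictScalars k) Y.subtype_injective
  let S : Set (ℕ × ℕ) := {p | ∃ Y : Submodule R X, IsSimpleModule R Y ∧
    p = (Module.finrank k (X →ₗ[R] Y), Module.finrank k Y)}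
  have hS : S.Finite := by
    refine (Set.finite_Iic (Module.finrank k (X →ₗ[R] X), Module.finrank k X)).subset ?_
    rintro _ ⟨Y, -, rfl⟩
    exact ⟨finrank_linearMap_le_of_injective Y.subtype Y.subtype_injective,
      LinearMap.finrank_le_finrank_of_injective (f := Y.subtype.restrictScalars k)
        Y.subtype_injective⟩
  obtain ⟨Y₀, hY₀⟩ := IsSemisimpleModule.exists_simple_submodule R X
  obtain ⟨_, ⟨Y, hY, rfl⟩, hmax⟩ := Set.exists_max_image S (fun p => (p.1 : ℚ) / p.2) hS
    ⟨_, Y₀, hY₀, rfl⟩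
  have hYnt : Nontrivial Y := IsSimpleModule.nontrivial R Y
  obtain ⟨p, hp⟩ := IsSemisimpleModule.extension_property Y.subtype Y.subtype_injective
    LinearMap.id
  have := finite_linearMap_of_isScalarTower k R X Y
  have hq : 0 < Module.finrank k (X →ₗ[R] Y) := by
    obtain ⟨y, hy⟩ := exists_ne (0 : Y)
    refine Module.finrank_pos_iff_exists_ne_zero.mpr ⟨p, fun h0 => hy ?_⟩
    simpa [h0] using (LinearMap.congr_fun hp y).symm
  have hr : 0 < Module.finrank k Y := Module.finrank_pos
  obtain ⟨g, hg⟩ := exists_surjective_of_finrank_le (k := k) (R := R)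
    (E := Fin (Module.finrank k (X →ₗ[R] Y)) → R) (F := Fin (Module.finrank k Y) → X)
    fun Z hZ => by
      obtain ⟨z, hz⟩ := @exists_ne Z (IsSimpleModule.nontrivial R Z) 0
      obtain ⟨l, hl⟩ : ∃ l, z.1 l ≠ 0 := by
        by_contra! h0
        exact hz (Subtype.ext (funext h0))
      let c : Z →ₗ[R] X := LinearMap.proj l ∘ₗ Z.subtype
      have hc : Function.Injective c := LinearMap.injective_of_ne_zero fun h0 =>
        hl (LinearMap.congr_fun h0 z)
      let e := LinearEquiv.ofInjective c hc
      have hsimple : IsSimpleModule R (LinearMap.range c) := .congr e.symm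
      have hle := hmax _ ⟨_, hsimple, rfl⟩
      have := IsSimpleModule.nontrivial R (LinearMap.range c)
      have hpos : 0 < Module.finrank k (LinearMap.range c) := Module.finrank_pos
      have hZfin : Module.Finite k Z :=
        .of_injective (Z.subtype.restrictScalars k) Z.subtype_injective
      rw [div_le_div_iff₀ (by exact_mod_cast hpos) (by exact_mod_cast hr)] at hle
      rw [finrank_linearMap_pi k R _ X, finrank_linearMap_pi_self,
        (e.restrictScalars k).finrank_eq]
      calc _ ≤ Module.finrank k Y * Module.finrank k (X →ₗ[R] LinearMap.range c) :=
            Nat.mul_le_mul_left _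
              (finrank_linearMap_le_of_injective e.toLinearMap e.injective)
        _ ≤ _ := by rw [mul_comm]; exact_mod_cast hle
  refine ⟨_, _, Y, g, hq, hYnt, hg, ?_⟩
  have := finite_linearMap_of_isScalarTower k R (Fin (Module.finrank k Y) → X) Y
  have := finite_linearMap_of_isScalarTower k R (Fin (Module.finrank k (X →ₗ[R] Y)) → R) Y
  have hinj : Function.Injective (LinearMap.lcomp k Y g) := fun a b hab =>
    (LinearMap.cancel_right hg).mp hab
  refine (LinearMap.injective_iff_surjective_of_finrank_eq_finrank ?_).mp hinj
  rw [finrank_linearMap_pi k R _ X, finrank_linearMap_pi_self, mul_comm]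

variable (k R X) in
/-- Over a finite-dimensional algebra, some power `X ^ r` of a nonzero finite-dimensional module
is generated by `q` elements which behave like a basis with respect to a nonzero quotient of
`X`. -/
theorem exists_generators_relatively_free [Module.Finite k R] [Module.Finite k X] [Nontrivial X] :
    ∃ (q r : ℕ) (Y : Submodule R (X ⧸ Module.jacobson R X)) (π : X →ₗ[R] Y)
      (g : (Fin q → R) →ₗ[R] (Fin r → X)),
      0 < q ∧ Nontrivial Y ∧ Function.Surjective π ∧ Function.Surjective g ∧
      ∀ f : (Fin q → R) →ₗ[R] Y, ∃ φ : (Fin r → X) →ₗ[R] Y, φ ∘ₗ g = f := by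
  have : Module.Finite k (X ⧸ Module.jacobson R X) := inferInstance
  have : Module.Finite R X := .of_restrictScalars_finite k R X
  have : IsArtinian R (X ⧸ Module.jacobson R X) := isArtinian_of_tower k inferInstance
  have : IsSemisimpleModule R (X ⧸ Module.jacobson R X) :=
    (IsArtinian.isSemisimpleModule_iff_jacobson R _).mpr (Module.jacobson_quotient_jacobson R X)
  have : Nontrivial (X ⧸ Module.jacobson R X) :=
    Submodule.Quotient.nontrivial_iff.mpr (Module.jacobson_lt_top R X).ne
  obtain ⟨q, r, Y, g', hq, hY, hg', hfactor⟩ :=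
    IsSemisimpleModule.exists_generators_relatively_free k R (X ⧸ Module.jacobson R X)
  obtain ⟨p, hp⟩ := IsSemisimpleModule.extension_property Y.subtype Y.subtype_injective
    LinearMap.id
  have hp_surj : Function.Surjective p := fun y => ⟨y, LinearMap.congr_fun hp y⟩
  let m : (Fin r → X) →ₗ[R] (Fin r → X ⧸ Module.jacobson R X) :=
    LinearMap.pi fun l => (Module.jacobson R X).mkQ ∘ₗ LinearMap.proj l
  have hm : Function.Surjective m := fun y => by
    choose x hx using fun l => (Module.jacobson R X).mkQ_surjective (y l)
    exact ⟨x, funext hx⟩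
  obtain ⟨g, hg⟩ := Module.projective_lifting_property m g' hm
  refine ⟨q, r, Y, p ∘ₗ (Module.jacobson R X).mkQ, g, hq, hY,
    hp_surj.comp (Submodule.mkQ_surjective _), ?_, fun f => ?_⟩
  · rw [← LinearMap.range_eq_top]
    refine (eq_top_or_exists_le_coatom _).resolve_right ?_
    rintro ⟨T, hT, hgT⟩
    have hker : LinearMap.ker m ≤ T := by
      intro x hx
      rw [← Finset.univ_sum_single x]
      refine T.sum_mem fun l _ => ?_
      have hxl : x l ∈ Module.jacobson R X :=
        (Submodule.Quotient.mk_eq_zero _).mp (congrFun (LinearMap.mem_ker.mp hx) l)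
      exact (sInf_le hT : Module.jacobson R (Fin r → X) ≤ T)
        (Module.le_comap_jacobson (LinearMap.single R (fun _ : Fin r => X) l) hxl)
    refine hT.1 (eq_top_iff.mpr fun x _ => ?_)
    obtain ⟨a, ha⟩ := hg' (m x)
    have hmem : x - g a ∈ T := hker (by
      rw [LinearMap.mem_ker, map_sub, ← ha, ← hg, LinearMap.comp_apply, sub_self])
    simpa using T.add_mem hmem (hgT (LinearMap.mem_range_self g a))
  · obtain ⟨φ, hφ⟩ := hfactor f
    exact ⟨φ ∘ₗ m, by rw [LinearMap.comp_assoc, hg, hφ]⟩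

end ModuleTheory

section Coaction

variable {k}
variable {B M Y : Type*} [Ring B] [Algebra k B]
  [AddCommGroup M] [Module k M] [Module B M] [IsScalarTower k B M]
  [AddCommGroup Y] [Module k Y] [Module B Y] [IsScalarTower k B Y]

/-- The slice map `id ⊗ f : A ⊗ M → A` of a functional `f` on `M`. -/
def rightSlice (A : Type*) [Ring A] [HopfAlgebra k A] (f : M →ₗ[k] k) : A ⊗[k] M →ₗ[k] A :=
  (TensorProduct.rid k A).toLinearMap ∘ₗ f.lTensor A

@[simp]
theorem rightSlice_tmul (f : M →ₗ[k] k) (a : A) (m : M) :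
    rightSlice A f (a ⊗ₜ m) = f m • a := by
  simp [rightSlice]

theorem rightSlice_lTensor {M' : Type*} [AddCommGroup M'] [Module k M'] (f : M →ₗ[k] k)
    (p : M' →ₗ[k] M) (t : A ⊗[k] M') :
    rightSlice A f (p.lTensor A t) = rightSlice A (f ∘ₗ p) t := by
  simp [rightSlice, LinearMap.lTensor_comp]

theorem rightSlice_sum {ι : Type*} (s : Finset ι) (f : ι → M →ₗ[k] k) (t : A ⊗[k] M) :
    rightSlice A (∑ i ∈ s, f i) t = ∑ i ∈ s, rightSlice A (f i) t := by
  induction t with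
  | zero => simp
  | add t₁ t₂ h₁ h₂ => simp [h₁, h₂, Finset.sum_add_distrib]
  | tmul a m => simp [Finset.sum_smul]

theorem rightSlice_smul (c : k) (f : M →ₗ[k] k) (t : A ⊗[k] M) :
    rightSlice A (c • f) t = c • rightSlice A f t := by
  simp [rightSlice, LinearMap.lTensor_smul]

/-- The action of `A ⊗ B` on `A ⊗ M` induced by an action of `B` on `M`. -/
def tensorAct (A B M : Type*) [Ring A] [HopfAlgebra k A] [Ring B] [Algebra k B]
    [AddCommGroup M] [Module k M] [Module B M] [IsScalarTower k B M] :
    A ⊗[k] B →ₗ[k] A ⊗[k] M →ₗ[k] A ⊗[k] M :=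
  TensorProduct.map₂ (LinearMap.mul k A) (Algebra.lsmul k k M).toLinearMap

@[simp]
theorem tensorAct_tmul (a a' : A) (b : B) (m : M) :
    tensorAct (k := k) A B M (a ⊗ₜ b) (a' ⊗ₜ m) = (a * a') ⊗ₜ (b • m) := by
  simp [tensorAct]

variable (k) in
/-- The linear map `b ↦ b • y`. -/
def actOn (B : Type*) [Ring B] [Algebra k B] {Y : Type*} [AddCommGroup Y] [Module k Y] [Module B Y]
    [IsScalarTower k B Y] (y : Y) : B →ₗ[k] Y :=
  (LinearMap.toSpanSingleton B Y y).restrictScalars k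

@[simp]
theorem actOn_apply (y : Y) (b : B) : actOn k B y b = b • y := rfl

theorem rightSlice_tensorAct {ι : Type*} [Fintype ι] (y : Module.Basis ι k Y) (η : Y →ₗ[k] k)
    (φ : M →ₗ[B] Y) (s : A ⊗[k] B) (t : A ⊗[k] M) :
    rightSlice A (η ∘ₗ φ.restrictScalars k) (tensorAct A B M s t) =
      ∑ b, rightSlice A (η ∘ₗ actOn k B (y b)) s *
        rightSlice A (y.coord b ∘ₗ φ.restrictScalars k) t := by
  induction s with
  | zero => simp
  | add s₁ s₂ h₁ h₂ => simp [h₁, h₂, add_mul, Finset.sum_add_distrib]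
  | tmul a x =>
    induction t with
    | zero => simp
    | add t₁ t₂ h₁ h₂ => simp only [map_add, h₁, h₂, mul_add, Finset.sum_add_distrib]
    | tmul a' m =>
      have h : η (x • φ m) = ∑ b, y.repr (φ m) b * η (x • y b) := by
        conv_lhs => rw [← y.sum_repr (φ m)]
        simp only [Finset.smul_sum, map_sum, smul_comm x, map_smul, smul_eq_mul]
      simp only [tensorAct_tmul, rightSlice_tmul, LinearMap.comp_apply,
        LinearMap.restrictScalars_apply, map_smul, h, Finset.sum_smul, actOn_apply,
        Module.Basis.coord_apply, smul_mul_smul_comm]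
      exact Finset.sum_congr rfl fun b _ => by rw [mul_comm]

/-- A linear map `δ : M → A ⊗ M` inverted by the antipode in the sense
`S(m₁) m₂ ⊗ m₃ = 1 ⊗ m`. -/
def AntipodeCancels (δ : M →ₗ[k] A ⊗[k] M) : Prop :=
  ∀ (f : M →ₗ[k] k) (m : M),
    LinearMap.mul' k A (TensorProduct.map (HopfAlgebra.antipode k) (rightSlice A f ∘ₗ δ) (δ m)) =
      algebraMap k A (f m)

theorem rightSlice_eq_zero_of_relation
    (hwf : ∀ n : ℕ, 0 < n → ∀ x y : Matrix (Fin n) (Fin n) A, x * y = 1 → y * x = 1)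
    (δB : B →ₗ[k] A ⊗[k] B) (δM : M →ₗ[k] A ⊗[k] M)
    (hδ : ∀ (x : B) (m : M), δM (x • m) = tensorAct A B M (δB x) (δM m))
    (hS : AntipodeCancels δM) [Module.Finite k Y] {q : ℕ} (g : (Fin q → B) →ₗ[B] M)
    (hg : Function.Surjective g)
    (hfactor : ∀ f : (Fin q → B) →ₗ[B] Y, ∃ φ : M →ₗ[B] Y, φ ∘ₗ g = f)
    (κ : Fin q → B) (hκ : g κ = 0) (j : Fin q) (η : Y →ₗ[k] k) (y : Y) :
    rightSlice A (η ∘ₗ actOn k B y) (δB (κ j)) = 0 := by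
  have : IsStablyFiniteRing A := ⟨fun n => ⟨fun {x y} hxy => by
    rcases Nat.eq_zero_or_pos n with rfl | hn
    · exact Subsingleton.elim _ _
    · exact hwf n hn _ _ hxy⟩⟩
  let e := Module.finBasis k Y
  obtain ⟨σ, hσ⟩ := (g.restrictScalars k).exists_rightInverse_of_surjective
    (LinearMap.range_eq_top.mpr hg)
  let γ : Fin q → M := fun j => g (Pi.single j 1)
  have hgsum (x : Fin q → B) : g x = ∑ j, x j • γ j := by
    conv_lhs => rw [pi_eq_sum_univ' x]
    simp [γ, Pi.single]
  have hφ (i : Fin q) (c) : ∃ φ : M →ₗ[B] Y, ∀ j, φ (γ j) = if i = j then e c else 0 := by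
    obtain ⟨φ, hφ⟩ := hfactor (LinearMap.toSpanSingleton B Y (e c) ∘ₗ LinearMap.proj i)
    refine ⟨φ, fun j => (LinearMap.congr_fun hφ _).trans ?_⟩
    simp [Pi.single_apply, ite_smul]
  choose φ hφ using hφ
  let T : Matrix (Fin q × Fin (Module.finrank k Y)) (Fin q × Fin (Module.finrank k Y)) A :=
    .of fun jb ic => rightSlice A (e.coord jb.2 ∘ₗ (φ ic.1 ic.2).restrictScalars k) (δM (γ jb.1))
  let ψ (j b b₀) : M →ₗ[k] A :=
    rightSlice A (e.coord b₀ ∘ₗ actOn k B (e b)) ∘ₗ δB ∘ₗ LinearMap.proj j ∘ₗ σ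
  let L : Matrix (Fin q × Fin (Module.finrank k Y)) (Fin q × Fin (Module.finrank k Y)) A :=
    .of fun jb₀ jb => LinearMap.mul' k A
      (TensorProduct.map (HopfAlgebra.antipode k) (ψ jb.1 jb.2 jb₀.2) (δM (γ jb₀.1)))
  have hpair (η : Y →ₗ[k] k) (f : M →ₗ[B] Y) (x : Fin q → B) :
      ∑ j, ∑ b, rightSlice A (η ∘ₗ actOn k B (e b)) (δB (x j)) *
        rightSlice A (e.coord b ∘ₗ f.restrictScalars k) (δM (γ j)) =
      rightSlice A (η ∘ₗ f.restrictScalars k) (δM (g x)) := by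
    simp only [hgsum, map_sum, hδ, rightSlice_tensorAct e]
  have hLT : L * T = 1 := by
    ext ⟨j₀, b₀⟩ ⟨i, c⟩
    rw [Matrix.mul_apply, Fintype.sum_prod_type]
    have key (t : A ⊗[k] M) : ∑ j, ∑ b, LinearMap.mul' k A
        (TensorProduct.map (HopfAlgebra.antipode k) (ψ j b b₀) t) * T (j, b) (i, c) =
        LinearMap.mul' k A (TensorProduct.map (HopfAlgebra.antipode k)
          (rightSlice A (e.coord b₀ ∘ₗ (φ i c).restrictScalars k) ∘ₗ δM) t) := by
      induction t with
      | zero => simp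
      | add t₁ t₂ h₁ h₂ => simp only [map_add, add_mul, Finset.sum_add_distrib, h₁, h₂]
      | tmul a m =>
        have hm : g (σ m) = m := LinearMap.congr_fun hσ m
        have := hpair (e.coord b₀) (φ i c) (σ m)
        rw [hm] at this
        simp only [TensorProduct.map_tmul, LinearMap.mul'_apply, LinearMap.comp_apply, ← this,
          Finset.mul_sum, mul_assoc]
        rfl
    refine (key _).trans ?_
    rw [hS, LinearMap.comp_apply, LinearMap.restrictScalars_apply, hφ]
    by_cases hi : i = j₀ <;> by_cases hc : c = b₀ <;>
      simp [Matrix.one_apply, hi, hc, Ne.symm]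
  have hTL : T * L = 1 := mul_eq_one_symm hLT
  let w (jb : Fin q × Fin (Module.finrank k Y)) : A :=
    rightSlice A (η ∘ₗ actOn k B (e jb.2)) (δB (κ jb.1))
  have hwT : Matrix.vecMul w T = 0 := by
    ext ⟨i, c⟩
    refine (Fintype.sum_prod_type _).trans ((hpair η (φ i c) κ).trans ?_)
    simp [hκ]
  have hw : w = 0 := by
    rw [← Matrix.vecMul_one w, ← hTL, ← Matrix.vecMul_vecMul, hwT, Matrix.zero_vecMul]
  have hy : η ∘ₗ actOn k B y = ∑ b, e.repr y b • (η ∘ₗ actOn k B (e b)) := by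
    ext x
    conv_lhs => rw [← e.sum_repr y]
    simp only [LinearMap.comp_apply, actOn_apply, Finset.smul_sum, map_sum, smul_comm x, map_smul,
      LinearMap.sum_apply, LinearMap.smul_apply]
  rw [hy, rightSlice_sum, Finset.sum_eq_zero]
  intro b _
  rw [rightSlice_smul, show rightSlice A (η ∘ₗ actOn k B (e b)) (δB (κ j)) = 0 from
    congrFun hw (j, b), smul_zero]

end Coaction

section Slices

open Coalgebra HopfAlgebra

variable {k}
variable {B M N : Type*} [AddCommGroup M] [Module k M] [AddCommGroup N] [Module k N]
  [Ring B] [Algebra k B] [Module B M] [IsScalarTower k B M]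

/-- The slice map `μ ⊗ id : A ⊗ M → M` of a functional `μ` on `A`. -/
def leftSlice (μ : A →ₗ[k] k) : A ⊗[k] M →ₗ[k] M :=
  (TensorProduct.lid k M).toLinearMap ∘ₗ μ.rTensor M

@[simp]
theorem leftSlice_tmul (μ : A →ₗ[k] k) (a : A) (m : M) :
    leftSlice μ (a ⊗ₜ[k] m) = μ a • m := by
  simp [leftSlice]

theorem apply_rightSlice (μ : A →ₗ[k] k) (f : M →ₗ[k] k) (t : A ⊗[k] M) :
    μ (rightSlice A f t) = f (leftSlice μ t) := by
  induction t with
  | zero => simp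
  | add t₁ t₂ h₁ h₂ => simp [h₁, h₂]
  | tmul a m => simp [mul_comm]

theorem leftSlice_lTensor (μ : A →ₗ[k] k) (p : M →ₗ[k] N) (t : A ⊗[k] M) :
    leftSlice μ (p.lTensor A t) = p (leftSlice μ t) := by
  induction t with
  | zero => simp
  | add t₁ t₂ h₁ h₂ => simp [h₁, h₂]
  | tmul a m => simp

theorem leftSlice_one_tmul_mul (μ : A →ₗ[k] k) (x : B) (t : A ⊗[k] B) :
    leftSlice μ ((1 : A) ⊗ₜ[k] x * t) = x * leftSlice μ t := by
  induction t with
  | zero => simp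
  | add t₁ t₂ h₁ h₂ => simp [mul_add, h₁, h₂]
  | tmul a m => simp

theorem leftSlice_tmul_one_mul (μ : A →ₗ[k] k) (a : A) (t : A ⊗[k] B) :
    leftSlice μ (a ⊗ₜ[k] (1 : B) * t) = leftSlice (μ ∘ₗ LinearMap.mulLeft k a) t := by
  induction t with
  | zero => simp
  | add t₁ t₂ h₁ h₂ => simp [mul_add, h₁, h₂]
  | tmul a m => simp

theorem rightSlice_tmul_one_mul (f : B →ₗ[k] k) (a : A) (t : A ⊗[k] B) :
    rightSlice A f (a ⊗ₜ[k] (1 : B) * t) = a * rightSlice A f t := by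
  induction t with
  | zero => simp
  | add t₁ t₂ h₁ h₂ => simp [mul_add, h₁, h₂]
  | tmul a m => simp

theorem comul_leftSlice_comul (μ : A →ₗ[k] k) (a : A) :
    comul (R := k) (leftSlice μ (comul (R := k) a)) =
      (leftSlice μ ∘ₗ comul).rTensor A (comul (R := k) a) := by
  have h (t : A ⊗[k] A) : comul (R := k) (leftSlice μ t) =
      (leftSlice μ).rTensor A ((TensorProduct.assoc k A A A).symm (comul.lTensor A t)) := by
    induction t with
    | zero => simp
    | add t₁ t₂ h₁ h₂ => simp [h₁, h₂]
    | tmul a b =>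
      simp only [leftSlice_tmul, map_smul, LinearMap.lTensor_tmul]
      induction comul (R := k) b with
      | zero => simp
      | add t₁ t₂ h₁ h₂ => simp [TensorProduct.tmul_add, h₁, h₂]
      | tmul c d => simp [TensorProduct.smul_tmul']
  rw [h, coassoc_symm_apply, LinearMap.rTensor_comp_apply]

theorem comul_rightSlice_comul (f : A →ₗ[k] k) (a : A) :
    comul (R := k) (rightSlice A f (comul (R := k) a)) =
      (rightSlice A f ∘ₗ comul).lTensor A (comul (R := k) a) := by
  have h (t : A ⊗[k] A) : comul (R := k) (rightSlice A f t) =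
      (rightSlice A f).lTensor A (TensorProduct.assoc k A A A (comul.rTensor A t)) := by
    induction t with
    | zero => simp
    | add t₁ t₂ h₁ h₂ => simp [h₁, h₂]
    | tmul a b =>
      simp only [rightSlice_tmul, map_smul, LinearMap.rTensor_tmul]
      induction comul (R := k) a with
      | zero => simp
      | add t₁ t₂ h₁ h₂ => simp [TensorProduct.add_tmul, h₁, h₂]
      | tmul c d => simp
  rw [h, coassoc_apply, LinearMap.lTensor_comp_apply]

variable (k A) in
/-- The map `a ⊗ b ↦ (S(a) ⊗ 1)Δ(b)`. -/
def antipodeComul : A ⊗[k] A →ₗ[k] A ⊗[k] A :=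
  LinearMap.mul' k (A ⊗[k] A) ∘ₗ TensorProduct.map
    ((TensorProduct.mk k A A).flip 1 ∘ₗ antipode k) comul

theorem antipodeComul_tmul (a b : A) :
    antipodeComul k A (a ⊗ₜ b) = (antipode k a ⊗ₜ[k] 1) * comul b := by
  simp [antipodeComul]

theorem antipodeComul_comul (a : A) : antipodeComul k A (comul a) = 1 ⊗ₜ a := by
  have h (t : A ⊗[k] A) : antipodeComul k A t =
      (LinearMap.mul' k A ∘ₗ (antipode k).rTensor A).rTensor A
        ((TensorProduct.assoc k A A A).symm (comul.lTensor A t)) := by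
    induction t with
    | zero => simp
    | add t₁ t₂ h₁ h₂ => simp only [map_add, h₁, h₂]
    | tmul a b =>
      rw [antipodeComul_tmul, LinearMap.lTensor_tmul]
      induction comul (R := k) b with
      | zero => simp
      | add t₁ t₂ h₁ h₂ => simp only [TensorProduct.tmul_add, map_add, mul_add, h₁, h₂]
      | tmul c d => simp
  rw [h, coassoc_symm_apply, ← LinearMap.rTensor_comp_apply, LinearMap.comp_assoc,
    mul_antipode_rTensor_comul, LinearMap.rTensor_comp_apply, rTensor_counit_comul]
  simp

theorem antipodeComul_mul_one_tmul (t : A ⊗[k] A) (x : A) :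
    antipodeComul k A (t * 1 ⊗ₜ x) = antipodeComul k A t * comul x := by
  induction t with
  | zero => simp
  | add t₁ t₂ h₁ h₂ => simp only [map_add, add_mul, h₁, h₂]
  | tmul a b =>
    simp [antipodeComul_tmul, mul_assoc]

theorem mul'_map_antipode_rightSlice (f : A →ₗ[k] k) (a : A) :
    LinearMap.mul' k A (TensorProduct.map (antipode k) (rightSlice A f ∘ₗ comul) (comul a)) =
      algebraMap k A (f a) := by
  have h (t : A ⊗[k] A) :
      LinearMap.mul' k A (TensorProduct.map (antipode k) (rightSlice A f ∘ₗ comul) t) =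
        rightSlice A f (antipodeComul k A t) := by
    induction t with
    | zero => simp
    | add t₁ t₂ h₁ h₂ => simp only [map_add, h₁, h₂]
    | tmul a b => simp [antipodeComul_tmul, rightSlice_tmul_one_mul]
  rw [h, antipodeComul_comul, rightSlice_tmul, Algebra.algebraMap_eq_smul_one]

theorem eq_zero_of_tmul_eq_zero {x : A} {c : M} (hc : c ≠ 0) (h : x ⊗ₜ[k] c = 0) : x = 0 := by
  by_contra hx
  refine hc ((Module.forall_dual_apply_eq_zero_iff k c).mp fun f => ?_)
  have := congrArg (rightSlice A f) h
  rw [rightSlice_tmul, map_zero] at this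
  exact (smul_eq_zero.mp this).resolve_right hx

end Slices

section InducedCoaction

open Coalgebra HopfAlgebra

variable {k}
variable {B M : Type*} [Ring B] [Algebra k B]
  [AddCommGroup M] [Module k M] [Module B M] [IsScalarTower k B M]

/-- The coaction on `M` induced by the comultiplication along an embedding `ι : M → A` with
retraction `p`. -/
def inducedCoaction (ι : M →ₗ[k] A) (p : A →ₗ[k] M) : M →ₗ[k] A ⊗[k] M :=
  p.lTensor A ∘ₗ comul ∘ₗ ι

theorem lTensor_inducedCoaction {ι : M →ₗ[k] A} {p : A →ₗ[k] M} (hp : p ∘ₗ ι = LinearMap.id)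
    (hι : ∀ m, comul (ι m) ∈ LinearMap.range (ι.lTensor A)) (m : M) :
    ι.lTensor A (inducedCoaction ι p m) = comul (ι m) := by
  obtain ⟨t, ht⟩ := hι m
  rw [inducedCoaction, LinearMap.comp_apply, LinearMap.comp_apply, ← ht,
    ← LinearMap.lTensor_comp_apply, ← LinearMap.lTensor_comp_apply, LinearMap.comp_assoc, hp,
    LinearMap.comp_id]

theorem antipodeCancels_inducedCoaction {ι : M →ₗ[k] A} {p : A →ₗ[k] M}
    (hp : p ∘ₗ ι = LinearMap.id) (hι : ∀ m, comul (ι m) ∈ LinearMap.range (ι.lTensor A)) :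
    AntipodeCancels (inducedCoaction ι p) := by
  intro f m
  have h : rightSlice A f ∘ₗ inducedCoaction ι p =
      (rightSlice A (f ∘ₗ p) ∘ₗ comul) ∘ₗ ι := by
    ext m
    simp [inducedCoaction, rightSlice_lTensor]
  rw [h, ← LinearMap.comp_id (antipode k), TensorProduct.map_comp, LinearMap.comp_apply]
  refine (congrArg _ (congrArg _ (lTensor_inducedCoaction hp hι m))).trans ?_
  rw [mul'_map_antipode_rightSlice, LinearMap.comp_apply, ← LinearMap.comp_apply p ι, hp,
    LinearMap.id_apply]

theorem inducedCoaction_smul {ιB : B →ₗ[k] A} {pB : A →ₗ[k] B} {ι : M →ₗ[k] A} {p : A →ₗ[k] M}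
    (hpB : pB ∘ₗ ιB = LinearMap.id)
    (hιB : ∀ b, comul (ιB b) ∈ LinearMap.range (ιB.lTensor A))
    (hp : p ∘ₗ ι = LinearMap.id) (hι : ∀ m, comul (ι m) ∈ LinearMap.range (ι.lTensor A))
    (hmul : ∀ (b : B) (m : M), ι (b • m) = ιB b * ι m) (b : B) (m : M) :
    inducedCoaction ι p (b • m) =
      tensorAct A B M (inducedCoaction ιB pB b) (inducedCoaction ι p m) := by
  have h (s : A ⊗[k] B) (t : A ⊗[k] M) :
      p.lTensor A (ιB.lTensor A s * ι.lTensor A t) = tensorAct A B M s t := by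
    induction s with
    | zero => simp
    | add s₁ s₂ h₁ h₂ => simp only [map_add, add_mul, LinearMap.add_apply, h₁, h₂]
    | tmul a b =>
      induction t with
      | zero => simp
      | add t₁ t₂ h₁ h₂ => simp only [map_add, mul_add, h₁, h₂]
      | tmul a' m =>
        simp [← hmul, ← LinearMap.comp_apply p ι, hp]
  rw [← h, lTensor_inducedCoaction hpB hιB, lTensor_inducedCoaction hp hι, ← Bialgebra.comul_mul,
    ← hmul]
  rfl

theorem tensorAct_lTensor {N : Type*} [AddCommGroup N] [Module k N] [Module B N]
    [IsScalarTower k B N] (φ : M →ₗ[B] N) (s : A ⊗[k] B) (t : A ⊗[k] M) :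
    tensorAct A B N s ((φ.restrictScalars k).lTensor A t) =
      (φ.restrictScalars k).lTensor A (tensorAct A B M s t) := by
  induction s with
  | zero => simp
  | add s₁ s₂ h₁ h₂ => simp only [map_add, LinearMap.add_apply, h₁, h₂]
  | tmul a b =>
    induction t with
    | zero => simp
    | add t₁ t₂ h₁ h₂ => simp only [map_add, h₁, h₂]
    | tmul a' m => simp

/-- The componentwise coaction on `M ^ r`. -/
def piCoaction (r : ℕ) (δ : M →ₗ[k] A ⊗[k] M) : (Fin r → M) →ₗ[k] A ⊗[k] (Fin r → M) :=
  ∑ l, (LinearMap.single k (fun _ : Fin r => M) l).lTensor A ∘ₗ δ ∘ₗ LinearMap.proj l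

theorem piCoaction_smul {r : ℕ} {δB : B →ₗ[k] A ⊗[k] B} {δ : M →ₗ[k] A ⊗[k] M}
    (hδ : ∀ (x : B) (m : M), δ (x • m) = tensorAct A B M (δB x) (δ m)) (x : B) (m : Fin r → M) :
    piCoaction r δ (x • m) = tensorAct A B (Fin r → M) (δB x) (piCoaction r δ m) := by
  simp only [piCoaction, LinearMap.sum_apply, LinearMap.comp_apply, LinearMap.proj_apply,
    Pi.smul_apply, hδ, map_sum]
  exact Finset.sum_congr rfl fun l _ =>
    (tensorAct_lTensor (LinearMap.single B (fun _ : Fin r => M) l) _ _).symm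

theorem piCoaction_comp_single {r : ℕ} (δ : M →ₗ[k] A ⊗[k] M) (l : Fin r) :
    piCoaction r δ ∘ₗ LinearMap.single k (fun _ : Fin r => M) l =
      (LinearMap.single k (fun _ : Fin r => M) l).lTensor A ∘ₗ δ := by
  ext m
  simp only [piCoaction, LinearMap.comp_apply, LinearMap.sum_apply]
  rw [Finset.sum_eq_single l]
  · simp
  · intro j _ hj
    simp [hj]
  · simp

theorem AntipodeCancels.pi {r : ℕ} {δ : M →ₗ[k] A ⊗[k] M} (hδ : AntipodeCancels δ) :
    AntipodeCancels (piCoaction r δ) := by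
  intro f m
  have h (l : Fin r) (t : A ⊗[k] M) :
      TensorProduct.map (antipode k) (rightSlice A f ∘ₗ piCoaction r δ)
        ((LinearMap.single k (fun _ : Fin r => M) l).lTensor A t) =
      TensorProduct.map (antipode k)
        (rightSlice A (f ∘ₗ LinearMap.single k (fun _ : Fin r => M) l) ∘ₗ δ) t := by
    rw [← LinearMap.comp_apply, LinearMap.map_comp_lTensor, LinearMap.comp_assoc,
      piCoaction_comp_single]
    congr 2
    ext m
    simp [rightSlice_lTensor]
  conv_lhs => enter [2, 2]; rw [piCoaction]
  simp only [LinearMap.sum_apply, map_sum, LinearMap.comp_apply, h]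
  simp only [LinearMap.proj_apply, hδ _ _, LinearMap.comp_apply]
  rw [← map_sum, ← map_sum]
  simp [LinearMap.single_apply, Finset.univ_sum_single]

end InducedCoaction

theorem Ideal.eq_top_of_bijective_of_span_smul_eq_top {R X : Type*} [Ring R] [AddCommGroup X]
    [Module R X] {I : Ideal R} (hI : ∀ v ∈ I, ∀ b, v * b ∈ I) {q r : ℕ} (hq : 0 < q)
    (g : (Fin q → R) →ₗ[R] (Fin r → X)) (hg : Function.Bijective g)
    (hX : Submodule.span R {x : X | ∃ v ∈ I, ∃ w : X, v • w = x} = ⊤) : I = ⊤ := by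
  let W : Submodule R (Fin q → R) := Submodule.pi Set.univ fun _ => I
  have hsingle (l : Fin r) : Submodule.span R {x : X | ∃ v ∈ I, ∃ w : X, v • w = x} ≤
      (W.map g).comap (LinearMap.single R (fun _ : Fin r => X) l) := by
    rw [Submodule.span_le]
    rintro _ ⟨v, hv, w, rfl⟩
    obtain ⟨u, hu⟩ := hg.2 (LinearMap.single R (fun _ : Fin r => X) l w)
    exact ⟨v • u, fun i _ => hI v hv _, by rw [map_smul, hu, map_smul]⟩
  obtain ⟨u, hu, hgu⟩ : g (Pi.single ⟨0, hq⟩ 1) ∈ W.map g := by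
    rw [← Finset.univ_sum_single (g (Pi.single ⟨0, hq⟩ 1))]
    exact Submodule.sum_mem _ fun l _ => hsingle l (hX ▸ Submodule.mem_top)
  rw [hg.1 hgu] at hu
  exact (Ideal.eq_top_iff_one I).mpr (by simpa using hu ⟨0, hq⟩ trivial)

section CoidealSubalgebra

open Coalgebra HopfAlgebra

variable {k}

theorem Subalgebra.eq_zero_of_rightSlice_eq_zero {B : Subalgebra k A} {p : A →ₗ[k] B}
    (hp : p ∘ₗ B.val.toLinearMap = LinearMap.id)
    (hB : ∀ b : B, comul (B.val.toLinearMap b) ∈ LinearMap.range (B.val.toLinearMap.lTensor A))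
    {Y : Type*} [AddCommGroup Y] [Module k Y] [Module B Y] [IsScalarTower k B Y]
    [Module.Finite k Y] {P x : B}
    (hx : comul (R := k) (x : A) * ((1 : A) ⊗ₜ[k] (P : A)) = (x : A) ⊗ₜ[k] (P : A))
    (hx0 : ∀ (η : Y →ₗ[k] k) (y : Y),
      rightSlice A (η ∘ₗ actOn k B y) (inducedCoaction B.val.toLinearMap p x) = 0)
    (η : Y →ₗ[k] k) (y : Y)
    (hP : rightSlice A (η ∘ₗ actOn k B y) (inducedCoaction B.val.toLinearMap p P) ≠ 0) :
    x = 0 := by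
  set δ := inducedCoaction B.val.toLinearMap p with hδ
  let c (f : B →ₗ[k] k) : B →ₗ[k] A := rightSlice A f ∘ₗ δ
  let e := Module.finBasis k Y
  have hc (f : B →ₗ[k] k) : c f = (rightSlice A (f ∘ₗ p) ∘ₗ comul) ∘ₗ B.val.toLinearMap := by
    ext b
    simp [c, hδ, inducedCoaction, rightSlice_lTensor]
  have hcomul (f : B →ₗ[k] k) (b : B) : comul (R := k) (c f b) = (c f).lTensor A (δ b) := by
    rw [hc, LinearMap.lTensor_comp_apply, lTensor_inducedCoaction hp hB, LinearMap.comp_apply,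
      LinearMap.comp_apply, comul_rightSlice_comul]
  have hmul (b : B) : c (η ∘ₗ actOn k B y) (b * P) =
      ∑ i, c (η ∘ₗ actOn k B (e i)) b * c (e.coord i ∘ₗ actOn k B y) P := by
    have h := inducedCoaction_smul hp hB hp hB (fun _ _ => map_mul B.val _ _) b P
    rw [smul_eq_mul] at h
    simp only [c, LinearMap.comp_apply, hδ, h]
    exact rightSlice_tensorAct e η (LinearMap.toSpanSingleton B Y y) _ _
  have hlT (t : A ⊗[k] B) : (c (η ∘ₗ actOn k B y) ∘ₗ LinearMap.mulRight k P).lTensor A t =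
      ∑ i, (c (η ∘ₗ actOn k B (e i))).lTensor A t * 1 ⊗ₜ c (e.coord i ∘ₗ actOn k B y) P := by
    induction t with
    | zero => simp
    | add t₁ t₂ h₁ h₂ => simp only [map_add, add_mul, h₁, h₂, Finset.sum_add_distrib]
    | tmul a b => simp [hmul, TensorProduct.tmul_sum]
  have hxP : (LinearMap.mulRight k P).lTensor A (δ x) = (x : A) ⊗ₜ P := by
    have hval (t : A ⊗[k] B) : (LinearMap.mulRight k P).lTensor A t =
        p.lTensor A (B.val.toLinearMap.lTensor A t * 1 ⊗ₜ (P : A)) := by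
      induction t with
      | zero => simp
      | add t₁ t₂ h₁ h₂ => simp only [map_add, add_mul, h₁, h₂]
      | tmul a b =>
        simpa using congrArg (a ⊗ₜ[k] ·) (LinearMap.congr_fun hp (b * P)).symm
    rw [hval, lTensor_inducedCoaction hp hB]
    refine (congrArg _ hx).trans ?_
    rw [LinearMap.lTensor_tmul]
    exact congrArg _ (LinearMap.congr_fun hp P)
  refine Subtype.ext (eq_zero_of_tmul_eq_zero (k := k) hP ?_)
  have h := hlT (δ x)
  rw [LinearMap.lTensor_comp_apply, hxP, LinearMap.lTensor_tmul] at h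
  refine h.trans (Finset.sum_eq_zero fun i _ => ?_)
  rw [← hcomul, show c (η ∘ₗ actOn k B (e i)) x = 0 from hx0 _ _, map_zero, zero_mul]

/-- The inclusion of a subalgebra `B` of `A` as a map of left `B`-modules. -/
def Subalgebra.valLinear (B : Subalgebra k A) : B →ₗ[B] A where
  toFun b := b
  map_add' _ _ := rfl
  map_smul' _ _ := rfl

theorem Submodule.span_smul_eq_top_of_le_mul_self {B : Subalgebra k A} {V : Submodule B A}
    (hVB : ∀ v ∈ V, v ∈ B)
    (hVV : V.restrictScalars k ≤ V.restrictScalars k * V.restrictScalars k) :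
    Submodule.span B {x : V | ∃ v ∈ V.comap B.valLinear, ∃ w : V, v • w = x} = ⊤ := by
  set T := Submodule.span B {x : V | ∃ v ∈ V.comap B.valLinear, ∃ w : V, v • w = x}
  have hle : V.restrictScalars k * V.restrictScalars k ≤ (T.map V.subtype).restrictScalars k := by
    rw [Submodule.mul_le]
    intro v hv w hw
    exact ⟨(⟨v, hVB v hv⟩ : B) • ⟨w, hw⟩,
      Submodule.subset_span ⟨⟨v, hVB v hv⟩, hv, ⟨w, hw⟩, rfl⟩, rfl⟩
  rw [eq_top_iff]
  rintro ⟨v, hv⟩ -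
  obtain ⟨t, ht, htv⟩ := hle (hVV hv)
  rwa [show (⟨v, hv⟩ : V) = t from Subtype.ext htv.symm]

/-- Let `B` be a finite-dimensional left coideal subalgebra, `V` an idempotent ideal of `B` which
is a left coideal generated by `P`, such that `Δ(b)(1 ⊗ P) = b ⊗ P` on `B`. If `A` is weakly finite
then `V` contains the unit. -/
theorem Subalgebra.one_mem_of_idempotent_coideal
    (hwf : ∀ n : ℕ, 0 < n → ∀ x y : Matrix (Fin n) (Fin n) A, x * y = 1 → y * x = 1)
    (B : Subalgebra k A) [Module.Finite k B]
    (hB : ∀ b : B, comul (B.val.toLinearMap b) ∈ LinearMap.range (B.val.toLinearMap.lTensor A))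
    (V : Submodule B A) [Nontrivial V] (hVB : ∀ v ∈ V, v ∈ B)
    (hVmul : ∀ v ∈ V, ∀ b ∈ B, v * b ∈ V)
    (hV : ∀ v : V, comul (R := k) (v : A) ∈
      LinearMap.range ((V.subtype.restrictScalars k).lTensor A))
    (hVV : V.restrictScalars k ≤ V.restrictScalars k * V.restrictScalars k)
    (P : B) (hBP : ∀ b ∈ B, comul (R := k) b * ((1 : A) ⊗ₜ[k] (P : A)) = b ⊗ₜ[k] (P : A))
    (hPV : ∀ v ∈ V, ∃ μ : A →ₗ[k] k, v = leftSlice μ (comul (R := k) (P : A))) :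
    (1 : A) ∈ V := by
  have hVfin : Module.Finite k V := by
    refine .of_injective (N := B) (LinearMap.codRestrict (Subalgebra.toSubmodule B)
      (V.subtype.restrictScalars k) fun v => hVB _ v.2) fun v w h => ?_
    exact Subtype.ext (congrArg (fun b : B => (b : A)) h)
  let I : Ideal B := V.comap B.valLinear
  have hspan : Submodule.span B {x : V | ∃ v ∈ I, ∃ w : V, v • w = x} = ⊤ :=
    Submodule.span_smul_eq_top_of_le_mul_self hVB hVV
  obtain ⟨q, r, Y, π, g, hq, hY, hπ, hg, hfactor⟩ := exists_generators_relatively_free k B V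
  have hYfin : Module.Finite k Y := .of_surjective (π.restrictScalars k) hπ
  obtain ⟨pB, hpB⟩ := B.val.toLinearMap.exists_leftInverse_of_injective
    (LinearMap.ker_eq_bot.mpr Subtype.val_injective)
  obtain ⟨pV, hpV⟩ := (V.subtype.restrictScalars k).exists_leftInverse_of_injective
    (LinearMap.ker_eq_bot.mpr Subtype.val_injective)
  have hnonzero : ∃ (η : Y →ₗ[k] k) (y : Y),
      rightSlice A (η ∘ₗ actOn k B y) (inducedCoaction B.val.toLinearMap pB P) ≠ 0 := by
    by_contra! h0
    have hsmul (v : A) (hv : v ∈ V) (y : Y) : (⟨v, hVB v hv⟩ : B) • y = 0 := by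
      refine (Module.forall_dual_apply_eq_zero_iff k _).mp fun η => ?_
      obtain ⟨μ, hμ⟩ := hPV v hv
      have h := congrArg μ (h0 η y)
      rw [apply_rightSlice, inducedCoaction, LinearMap.comp_apply, LinearMap.comp_apply,
        leftSlice_lTensor, map_zero] at h
      have h' : pB v = ⟨v, hVB v hv⟩ := LinearMap.congr_fun hpB ⟨v, hVB v hv⟩
      rw [← h', hμ]
      exact h
    have hker : LinearMap.ker π = ⊤ := by
      rw [eq_top_iff, ← hspan, Submodule.span_le]
      rintro _ ⟨v, hv, w, rfl⟩
      exact (π.map_smul v w).trans (hsmul v hv _)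
    obtain ⟨y, hy⟩ := exists_ne (0 : Y)
    obtain ⟨v, rfl⟩ := hπ y
    exact hy (hker ▸ Submodule.mem_top : v ∈ LinearMap.ker π)
  obtain ⟨η, y, hηy⟩ := hnonzero
  have hinj : Function.Injective g := by
    rw [injective_iff_map_eq_zero]
    intro κ hκ
    funext j
    refine Subalgebra.eq_zero_of_rightSlice_eq_zero hpB hB (hBP _ (κ j).2) (fun η y => ?_) η y hηy
    exact rightSlice_eq_zero_of_relation hwf _ _
      (piCoaction_smul (inducedCoaction_smul hpB hB hpV hV fun _ _ => rfl))
      (antipodeCancels_inducedCoaction hpV hV).pi g hg hfactor κ hκ j η y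
  have hItop : I = ⊤ := Ideal.eq_top_of_bijective_of_span_smul_eq_top
    (fun v hv b => hVmul v hv b b.2) hq g ⟨hinj, hg⟩ hspan
  exact (hItop ▸ Submodule.mem_top : (1 : B) ∈ I)

end CoidealSubalgebra

section GroupLikeProjection

open Coalgebra HopfAlgebra

/-- `V_P` as a subspace of `A`. -/
def VPSubmodule (P : A) : Submodule k A :=
  LinearMap.range ((TensorProduct.lid k A).toLinearMap ∘ₗ
    LinearMap.applyₗ (comul (R := k) P) ∘ₗ LinearMap.rTensorHom A)

variable {k}

theorem mem_VPSubmodule {P x : A} :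
    x ∈ VPSubmodule k P ↔ ∃ μ : A →ₗ[k] k, leftSlice μ (comul (R := k) P) = x :=
  Iff.rfl

theorem coe_VPSubmodule (P : A) : (VPSubmodule k P : Set A) = VPSet k P :=
  Set.ext fun _ => exists_congr fun _ => eq_comm

theorem mem_VPSubmodule_self (P : A) : P ∈ VPSubmodule k P :=
  mem_VPSubmodule.mpr ⟨counit, by simp [leftSlice]⟩

theorem exists_VPSubmodule_eq_span (P : A) : ∃ s : Finset A,
    VPSubmodule k P = Submodule.span k s ∧
      comul (R := k) P ∈ LinearMap.range ((VPSubmodule k P).subtype.lTensor A) := by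
  classical
  let b := Module.Basis.ofVectorSpace k A
  obtain ⟨c, hc⟩ := TensorProduct.eq_repr_basis_left b (comul (R := k) P)
  have hmem (i) : c i ∈ VPSubmodule k P := by
    refine mem_VPSubmodule.mpr ⟨b.coord i, ?_⟩
    rw [← hc, Finsupp.sum, map_sum]
    simp +contextual [Finsupp.single_apply, eq_comm]
  refine ⟨c.support.image c, le_antisymm ?_ (Submodule.span_le.mpr ?_), ?_⟩
  · rintro _ ⟨μ, rfl⟩
    change leftSlice μ (comul (R := k) P) ∈ _
    rw [← hc, Finsupp.sum, map_sum]
    refine Submodule.sum_mem _ fun i hi => ?_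
    rw [leftSlice_tmul]
    exact Submodule.smul_mem _ _ (Submodule.subset_span (Finset.mem_image_of_mem _ hi))
  · intro x hx
    obtain ⟨i, -, rfl⟩ := Finset.mem_image.mp hx
    exact hmem i
  · rw [← hc, Finsupp.sum]
    exact Submodule.sum_mem _ fun i _ => ⟨b i ⊗ₜ ⟨c i, hmem i⟩, by simp⟩

theorem comul_mem_range_of_mem_VPSubmodule {P x : A} (hx : x ∈ VPSubmodule k P) :
    comul (R := k) x ∈ LinearMap.range ((VPSubmodule k P).subtype.lTensor A) := by
  obtain ⟨-, -, t, ht⟩ := exists_VPSubmodule_eq_span (k := k) P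
  obtain ⟨μ, rfl⟩ := mem_VPSubmodule.mp hx
  refine ⟨(leftSlice μ ∘ₗ comul).rTensor _ t, ?_⟩
  rw [comul_leftSlice_comul, ← ht, ← LinearMap.comp_apply, ← LinearMap.comp_apply,
    LinearMap.lTensor_comp_rTensor, LinearMap.rTensor_comp_lTensor]

theorem VPSubmodule_le_mul_self {P : A} (hP : P * P = P) :
    VPSubmodule k P ≤ VPSubmodule k P * VPSubmodule k P := by
  obtain ⟨-, -, t, ht⟩ := exists_VPSubmodule_eq_span (k := k) P
  have h (μ : A →ₗ[k] k) (s t : A ⊗[k] VPSubmodule k P) :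
      leftSlice μ ((VPSubmodule k P).subtype.lTensor A s * (VPSubmodule k P).subtype.lTensor A t) ∈
        VPSubmodule k P * VPSubmodule k P := by
    induction s with
    | zero => simp
    | add s₁ s₂ h₁ h₂ => simpa only [map_add, add_mul] using Submodule.add_mem _ h₁ h₂
    | tmul a v =>
      induction t with
      | zero => simp
      | add t₁ t₂ h₁ h₂ => simpa only [map_add, mul_add] using Submodule.add_mem _ h₁ h₂
      | tmul b w =>
        simpa using Submodule.smul_mem _ (μ (a * b)) (Submodule.mul_mem_mul v.2 w.2)
  rintro _ ⟨μ, rfl⟩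
  change leftSlice μ (comul (R := k) P) ∈ _
  have hcomul : comul (R := k) P = comul P * comul P := by rw [← Bialgebra.comul_mul, hP]
  rw [hcomul, ← ht]
  exact h μ t t

theorem IsRightGroupLikeProjection.VPSet_subset_NPSet {P : A}
    (hP : IsRightGroupLikeProjection k P) : VPSet k P ⊆ NPSet k P := by
  obtain ⟨-, -, hr, hl⟩ := hP
  rintro _ ⟨μ, rfl⟩
  change leftSlice μ (comul (R := k) P) ∈ _
  let F : A →ₗ[k] A := leftSlice μ ∘ₗ comul
  have hmulr (t : A ⊗[k] A) : F.rTensor A t * 1 ⊗ₜ P = F.rTensor A (t * 1 ⊗ₜ P) := by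
    induction t with
    | zero => simp
    | add t₁ t₂ h₁ h₂ => simp only [map_add, add_mul, h₁, h₂]
    | tmul a b => simp
  have hmull (t : A ⊗[k] A) : 1 ⊗ₜ P * F.rTensor A t = F.rTensor A (1 ⊗ₜ P * t) := by
    induction t with
    | zero => simp
    | add t₁ t₂ h₁ h₂ => simp only [map_add, mul_add, h₁, h₂]
    | tmul a b => simp
  constructor
  · rw [NPlSet, Set.mem_ofPred_eq, comul_leftSlice_comul, hmull, hl, LinearMap.rTensor_tmul]
    rfl
  · rw [NPrSet, Set.mem_ofPred_eq, comul_leftSlice_comul, hmulr, hr, LinearMap.rTensor_tmul]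
    rfl

theorem mul_mem_VPSubmodule {P x v : A} (hx : x ∈ NPrSet k P) (hv : v ∈ VPSubmodule k P) :
    x * v ∈ VPSubmodule k P := by
  obtain ⟨μ, rfl⟩ := mem_VPSubmodule.mp hv
  have h := antipodeComul_mul_one_tmul (comul (R := k) x) P
  rw [Set.mem_ofPred_eq.mp hx, antipodeComul_comul, antipodeComul_tmul] at h
  refine mem_VPSubmodule.mpr ⟨μ ∘ₗ LinearMap.mulLeft k (antipode k x), ?_⟩
  rw [← leftSlice_tmul_one_mul, h, leftSlice_one_tmul_mul]

theorem IsRightGroupLikeProjection.one_mem_VPSubmodule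
    (hwf : ∀ n : ℕ, 0 < n → ∀ x y : Matrix (Fin n) (Fin n) A, x * y = 1 → y * x = 1)
    {P : A} (hP : IsRightGroupLikeProjection k P) : (1 : A) ∈ VPSubmodule k P := by
  set V := VPSubmodule k P with hVdef
  have hVN : ∀ v ∈ V, v ∈ NPrSet k P := fun v hv =>
    (hP.VPSet_subset_NPSet (coe_VPSubmodule (k := k) P ▸ hv)).2
  have hVV : ∀ v ∈ V, ∀ w ∈ V, v * w ∈ V := fun v hv w hw => mul_mem_VPSubmodule (hVN v hv) hw
  have hVfg : V.FG := by
    obtain ⟨s, hs, -⟩ := exists_VPSubmodule_eq_span (k := k) P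
    exact ⟨s, hs.symm⟩
  have hmul : (1 ⊔ V) * (1 ⊔ V) ≤ 1 ⊔ V := by
    rw [Submodule.sup_mul, Submodule.mul_sup V, one_mul, mul_one]
    exact sup_le le_rfl (sup_le le_sup_right ((Submodule.mul_le.mpr hVV).trans le_sup_right))
  let B : Subalgebra k A := (1 ⊔ V).toSubalgebra
    (Submodule.mem_sup_left (Submodule.one_le.mp le_rfl))
    fun x y hx hy => hmul (Submodule.mul_mem_mul hx hy)
  have hBmem {x : A} (hx : x ∈ B) : ∃ (c : k), ∃ v ∈ V, x = algebraMap k A c + v := by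
    obtain ⟨y, hy, v, hv, rfl⟩ := Submodule.mem_sup.mp hx
    obtain ⟨c, rfl⟩ := Submodule.mem_one.mp hy
    exact ⟨c, v, hv, rfl⟩
  have hVB : ∀ v ∈ V, v ∈ B := fun v hv => Submodule.mem_sup_right hv
  have hBfin : Module.Finite k B :=
    Module.Finite.iff_fg.mpr (Submodule.FG.sup ⟨{1}, by simp [Submodule.one_eq_span]⟩ hVfg)
  have hrange {N : Submodule k A} (hN : N ≤ Subalgebra.toSubmodule B) :
      LinearMap.range (N.subtype.lTensor A) ≤ LinearMap.range (B.val.toLinearMap.lTensor A) := by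
    rintro _ ⟨t, rfl⟩
    exact ⟨(Submodule.inclusion hN).lTensor A t, (LinearMap.lTensor_comp_apply ..).symm⟩
  let V' : Submodule B A :=
    { V with
      smul_mem' := by
        rintro ⟨x, hx⟩ w hw
        obtain ⟨c, v, hv, rfl⟩ := hBmem hx
        change (algebraMap k A c + v) * w ∈ V
        rw [add_mul, ← Algebra.smul_def]
        exact V.add_mem (V.smul_mem _ hw) (hVV v hv w hw) }
  have : Nontrivial V' :=
    ⟨⟨P, mem_VPSubmodule_self P⟩, 0, fun h => hP.1 (congrArg Subtype.val h)⟩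
  refine Subalgebra.one_mem_of_idempotent_coideal hwf B ?_ V' hVB ?_
    (fun v => comul_mem_range_of_mem_VPSubmodule v.2) (VPSubmodule_le_mul_self hP.2.1)
    ⟨P, hVB P (mem_VPSubmodule_self P)⟩ ?_ fun v hv => ?_
  · rintro ⟨x, hx⟩
    obtain ⟨c, v, hv, rfl⟩ := hBmem hx
    change comul (algebraMap k A c + v) ∈ _
    rw [map_add, Bialgebra.comul_algebraMap]
    refine Submodule.add_mem _ ⟨algebraMap k A c ⊗ₜ 1, rfl⟩
      (hrange hVB (comul_mem_range_of_mem_VPSubmodule hv))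
  · intro v hv x hx
    obtain ⟨c, w, hw, rfl⟩ := hBmem hx
    rw [mul_add, ← Algebra.commutes, ← Algebra.smul_def]
    exact V.add_mem (V.smul_mem _ hv) (hVV v hv w hw)
  · intro x hx
    obtain ⟨c, v, hv, rfl⟩ := hBmem hx
    rw [map_add, Bialgebra.comul_algebraMap, add_mul, TensorProduct.add_tmul]
    congr 1
    · simp [Algebra.TensorProduct.algebraMap_apply]
    · exact hVN v hv
  · obtain ⟨μ, rfl⟩ := mem_VPSubmodule.mp hv
    exact ⟨μ, rfl⟩

end GroupLikeProjection

/-- Theorem: if `A` is weakly finite then `N_P = V_P` for every right group-like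
projection `P ∈ A`. -/
theorem statement5
    (hS : Function.Bijective (HopfAlgebra.antipode (R := k) : A →ₗ[k] A))
    (hwf : ∀ n : ℕ, 0 < n → ∀ x y : Matrix (Fin n) (Fin n) A, x * y = 1 → y * x = 1)
    (P : A) (hP : IsRightGroupLikeProjection k P) :
    NPSet k P = VPSet k P := by
  refine Set.Subset.antisymm (fun x hx => ?_) hP.VPSet_subset_NPSet
  rw [← coe_VPSubmodule]
  simpa using mul_mem_VPSubmodule hx.2 (hP.one_mem_VPSubmodule hwf)
end
end

section
/- Let A be a Hopf algebra over a field k with bijective antipode and let P ∈ A be a two-sided group-like projection. Then the left coideal subalgebra N_P is a semisimple ring. -/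
open scoped TensorProduct

noncomputable section

variable (k : Type*) [Field k] {A : Type*} [Ring A] [HopfAlgebra k A]

open HopfAlgebra TensorProduct LinearMap WithConv
open Coalgebra (comul counit coassoc_apply coassoc_symm_apply rTensor_counit_comul)

section Antipode

/-- The antipode is an anti-homomorphism of coalgebras, in the form of a left convolution
inverse of the comultiplication. -/
lemma antipode_comm_comul_convMul_comul :
    toConv (map (antipode k) (antipode k) ∘ₗ (TensorProduct.comm k A A).toLinearMap ∘ₗ comul) *
      toConv (comul : A →ₗ[k] A ⊗[k] A) = 1 := by
  apply WithConv.ext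
  simp only [LinearMap.convMul_def, LinearMap.convOne_def, ofConv_toConv]
  let W : A ⊗[k] ((A ⊗[k] A) ⊗[k] A) →ₗ[k] A ⊗[k] A :=
    map (mul' k A ∘ₗ (antipode k).rTensor A) (mul' k A ∘ₗ (antipode k).rTensor A) ∘ₗ
      (TensorProduct.leftComm k A (A ⊗[k] A) A).toLinearMap
  let R : (A ⊗[k] A) ⊗[k] (A ⊗[k] A) →ₗ[k] A ⊗[k] ((A ⊗[k] A) ⊗[k] A) :=
    (TensorProduct.assoc k A A A).symm.toLinearMap.lTensor A ∘ₗ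
      (TensorProduct.assoc k A A (A ⊗[k] A)).toLinearMap
  have hmul : mul' k (A ⊗[k] A) ∘ₗ map (map (antipode k) (antipode k) ∘ₗ
      (TensorProduct.comm k A A).toLinearMap) LinearMap.id = W ∘ₗ R := by
    ext a b c d
    simp [W, R]
  have hcoassoc : R ∘ₗ map comul comul ∘ₗ (comul : A →ₗ[k] A ⊗[k] A) =
      (comul.rTensor A ∘ₗ comul).lTensor A ∘ₗ comul := by
    simp [R, coassoc_simps]
  have hcounit : W ∘ₗ (comul.rTensor A).lTensor A =
      TensorProduct.mk k A A 1 ∘ₗ mul' k A ∘ₗ (antipode k).rTensor A ∘ₗ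
        ((TensorProduct.lid k A).toLinearMap ∘ₗ counit.rTensor A).lTensor A := by
    ext a b c
    have := mul_antipode_rTensor_comul_apply (R := k) b
    have h : ∀ t : A ⊗[k] A, W (a ⊗ₜ (t ⊗ₜ c)) =
        mul' k A ((antipode k).rTensor A t) ⊗ₜ (antipode k a * c) := by
      intro t
      induction t with
      | zero => simp
      | tmul u v => simp [W]
      | add u v hu hv => simp only [tmul_add, add_tmul, map_add, hu, hv]
    simp [h, this, Algebra.algebraMap_eq_smul_one, smul_tmul]
  calc _ = (mul' k (A ⊗[k] A) ∘ₗ map (map (antipode k) (antipode k) ∘ₗ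
      (TensorProduct.comm k A A).toLinearMap) LinearMap.id) ∘ₗ map comul comul ∘ₗ comul := by
        simp only [LinearMap.comp_assoc]
        simp only [← LinearMap.comp_assoc, ← map_comp, LinearMap.id_comp]
    _ = (W ∘ₗ (comul.rTensor A).lTensor A) ∘ₗ comul.lTensor A ∘ₗ comul := by
        rw [hmul, LinearMap.comp_assoc, hcoassoc, lTensor_comp]
        simp only [LinearMap.comp_assoc]
    _ = _ := by
        rw [hcounit]
        ext a
        have h : ∀ t : A ⊗[k] A, ((TensorProduct.lid k A).toLinearMap ∘ₗ
            counit.rTensor A).lTensor A (comul.lTensor A t) = t := by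
          intro t
          rw [← LinearMap.comp_apply, ← lTensor_comp]
          have : ((TensorProduct.lid k A).toLinearMap ∘ₗ counit.rTensor A) ∘ₗ comul =
            LinearMap.id (R := k) (M := A) := by ext; simp
          rw [this]; simp
        simp only [LinearMap.comp_apply, h, mul_antipode_rTensor_comul_apply]
        simp [Algebra.algebraMap_eq_smul_one, Algebra.TensorProduct.one_def]

lemma comul_antipode (a : A) :
    comul (R := k) (antipode k a) =
      map (antipode k) (antipode k) (TensorProduct.comm k A A (comul a)) := by
  have := left_inv_eq_right_inv (antipode_comm_comul_convMul_comul k (A := A))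
    LinearMap.comul_right_inv
  exact congr(ofConv $this a).symm

end Antipode

section GroupLikeProjection

variable {k} {P : A}

lemma IsRightGroupLikeProjection.counit_eq_one (hP : IsRightGroupLikeProjection k P) :
    counit (R := k) P = 1 := by
  obtain ⟨h0, hi, hr, -⟩ := hP
  have h : ∀ t : A ⊗[k] A, TensorProduct.lid k A (counit.rTensor A (t * 1 ⊗ₜ P)) =
      TensorProduct.lid k A (counit.rTensor A t) * P := by
    intro t
    induction t with
    | zero => simp
    | tmul u v => simp
    | add u v hu hv => simp only [add_mul, map_add, hu, hv]
  have h1 := h (comul P)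
  rw [hr] at h1
  simp only [rTensor_tmul, lid_tmul, rTensor_counit_comul, one_smul, hi] at h1
  exact smul_left_injective k h0 (by simpa using h1)

/-- A two-sided group-like projection is fixed by the antipode. -/
lemma IsTwoSidedGroupLikeProjection.antipode_eq (hP : IsTwoSidedGroupLikeProjection k P) :
    antipode k P = P := by
  have hε := hP.1.counit_eq_one
  obtain ⟨⟨-, -, hr, -⟩, -, -, hl, -⟩ := hP
  have h1 : ∀ t : A ⊗[k] A, mul' k A ((antipode k).rTensor A (t * 1 ⊗ₜ P)) =
      mul' k A ((antipode k).rTensor A t) * P := by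
    intro t
    induction t with
    | zero => simp
    | tmul u v => simp [mul_assoc]
    | add u v hu hv => simp only [add_mul, map_add, hu, hv]
  have h2 : ∀ t : A ⊗[k] A, mul' k A ((antipode k).rTensor A (t * P ⊗ₜ 1)) =
      antipode k P * mul' k A ((antipode k).rTensor A t) := by
    intro t
    induction t with
    | zero => simp
    | tmul u v => simp [antipode_mul_antidistrib, mul_assoc]
    | add u v hu hv => simp only [add_mul, mul_add, map_add, hu, hv]
  have e1 := h1 (comul P)
  have e2 := h2 (comul P)
  rw [hr, mul_antipode_rTensor_comul_apply, hε] at e1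
  rw [hl, mul_antipode_rTensor_comul_apply, hε] at e2
  simp only [map_one, one_mul, mul_one] at e1 e2
  exact e2.symm.trans e1

variable (k) in
/-- The element `S(P₁) ⊗ P₂`. -/
def casimir (P : A) : A ⊗[k] A := (antipode k).rTensor A (comul P)

lemma mul'_casimir (hP : IsRightGroupLikeProjection k P) : mul' k A (casimir k P) = 1 := by
  rw [casimir, mul_antipode_rTensor_comul_apply, hP.counit_eq_one, map_one]

/-- The element `S(P₁) ⊗ P₂` commutes with `N_P^l` in the sense of bimodules. -/
lemma tmul_one_mul_casimir {x : A} (hx : x ∈ NPlSet k P) :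
    (x ⊗ₜ[k] 1) * casimir k P = casimir k P * (1 ⊗ₜ[k] x) := by
  let F : A ⊗[k] (A ⊗[k] A) →ₗ[k] A ⊗[k] A :=
    (mul' k A ∘ₗ (antipode k).lTensor A).rTensor A ∘ₗ
      (TensorProduct.assoc k A A A).symm.toLinearMap
  have hF : ∀ (p q c : A) (t : A ⊗[k] A),
      F ((1 ⊗ₜ (p ⊗ₜ q)) * TensorProduct.assoc k A A A (t ⊗ₜ c)) =
        (mul' k A ((antipode k).lTensor A t) * antipode k p) ⊗ₜ (q * c) := by
    intro p q c t
    induction t with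
    | zero => simp
    | tmul u v => simp [F, antipode_mul_antidistrib, mul_assoc]
    | add u v hu hv => simp only [add_mul, mul_add, add_tmul, map_add, hu, hv]
  have hF' : ∀ z t : A ⊗[k] A,
      F ((1 ⊗ₜ z) * TensorProduct.assoc k A A A (comul.rTensor A t)) =
        (antipode k).rTensor A z * 1 ⊗ₜ TensorProduct.lid k A (counit.rTensor A t) := by
    intro z t
    induction z with
    | zero => simp
    | add u v hu hv => simp only [tmul_add, add_mul, map_add, hu, hv]
    | tmul p q =>
      induction t with
      | zero => simp
      | add u v hu hv => simp only [tmul_add, mul_add, map_add, hu, hv]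
      | tmul u c =>
        simp [hF, Algebra.algebraMap_eq_smul_one, smul_tmul]
  have hc : ∀ t : A ⊗[k] A, comul.lTensor A ((1 ⊗ₜ P) * t) =
      (1 ⊗ₜ comul (R := k) P) * comul.lTensor A t := by
    intro t
    induction t with
    | zero => simp
    | tmul u v => simp
    | add u v hu hv => simp only [mul_add, map_add, hu, hv]
  have hx' : F (comul.lTensor A (x ⊗ₜ P)) = casimir k P * (1 ⊗ₜ[k] x) := by
    rw [← show _ = x ⊗ₜ[k] P from hx, hc, ← coassoc_apply, hF']
    simp [casimir]
  have hxe : ∀ t : A ⊗[k] A, F (x ⊗ₜ t) = (x ⊗ₜ[k] 1) * (antipode k).rTensor A t := by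
    intro t
    induction t with
    | zero => simp
    | tmul u v => simp [F]
    | add u v hu hv => simp only [mul_add, tmul_add, map_add, hu, hv]
  rw [← hx', lTensor_tmul, hxe, casimir]

lemma rTensor_assoc_symm_tmul (t : A ⊗[k] A) :
    (map (antipode k) (antipode k) ∘ₗ (TensorProduct.comm k A A).toLinearMap).rTensor A
      ((TensorProduct.assoc k A A A).symm (P ⊗ₜ t)) =
    ((TensorProduct.mk k A A).flip (antipode k P)).rTensor A ((antipode k).rTensor A t) := by
  induction t with
  | zero => simp
  | tmul u v => simp
  | add u v hu hv => simp only [tmul_add, map_add, hu, hv]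

lemma rTensor_comul_mul_casimir (hP : IsTwoSidedGroupLikeProjection k P) :
    (mulRight k ((1 : A) ⊗ₜ[k] P) ∘ₗ comul).rTensor A (casimir k P) =
      ((TensorProduct.mk k A A).flip P).rTensor A (casimir k P) := by
  have hS := hP.antipode_eq
  have hl := hP.2.2.2.2
  have hcomp : (mulRight k ((1 : A) ⊗ₜ[k] P) ∘ₗ comul) ∘ₗ antipode k =
      (map (antipode k) (antipode k) ∘ₗ (TensorProduct.comm k A A).toLinearMap) ∘ₗ
        mulLeft k (P ⊗ₜ[k] (1 : A)) ∘ₗ comul := by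
    ext a
    have h : ∀ t : A ⊗[k] A, map (antipode k) (antipode k) (TensorProduct.comm k A A t) *
        1 ⊗ₜ P = map (antipode k) (antipode k) (TensorProduct.comm k A A (P ⊗ₜ 1 * t)) := by
      intro t
      induction t with
      | zero => simp
      | tmul u v => simp [antipode_mul_antidistrib, hS]
      | add u v hu hv => simp only [add_mul, mul_add, map_add, hu, hv]
    simp [comul_antipode, h]
  have hass : ∀ t : A ⊗[k] A, (mulLeft k (P ⊗ₜ[k] (1 : A)) ∘ₗ comul).rTensor A t =
      (P ⊗ₜ 1) ⊗ₜ 1 * comul.rTensor A t := by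
    intro t
    induction t with
    | zero => simp
    | tmul u v => simp
    | add u v hu hv => simp only [mul_add, map_add, hu, hv]
  have hass' : ∀ t : A ⊗[k] (A ⊗[k] A), (P ⊗ₜ 1) ⊗ₜ 1 * (TensorProduct.assoc k A A A).symm t =
      (TensorProduct.assoc k A A A).symm (P ⊗ₜ 1 * t) := by
    intro t
    exact (map_mul (Algebra.TensorProduct.assoc k k k A A A).symm (P ⊗ₜ 1) t).symm
  have hlT : ∀ t : A ⊗[k] A, P ⊗ₜ 1 * comul.lTensor A t = comul.lTensor A (P ⊗ₜ[k] 1 * t) := by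
    intro t
    induction t with
    | zero => simp
    | tmul u v => simp
    | add u v hu hv => simp only [mul_add, map_add, hu, hv]
  rw [casimir, ← LinearMap.comp_apply, ← rTensor_comp, hcomp, rTensor_comp, LinearMap.comp_apply,
    hass, ← coassoc_symm_apply, hass', hlT, hl, lTensor_tmul, rTensor_assoc_symm_tmul, hS]

lemma rTensor_mul_comul_casimir (hP : IsTwoSidedGroupLikeProjection k P) :
    (mulLeft k ((1 : A) ⊗ₜ[k] P) ∘ₗ comul).rTensor A (casimir k P) =
      ((TensorProduct.mk k A A).flip P).rTensor A (casimir k P) := by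
  have hS := hP.antipode_eq
  have hl := hP.2.2.2.1
  have hcomp : (mulLeft k ((1 : A) ⊗ₜ[k] P) ∘ₗ comul) ∘ₗ antipode k =
      (map (antipode k) (antipode k) ∘ₗ (TensorProduct.comm k A A).toLinearMap) ∘ₗ
        mulRight k (P ⊗ₜ[k] (1 : A)) ∘ₗ comul := by
    ext a
    have h : ∀ t : A ⊗[k] A, 1 ⊗ₜ P * map (antipode k) (antipode k) (TensorProduct.comm k A A t) =
        map (antipode k) (antipode k) (TensorProduct.comm k A A (t * P ⊗ₜ 1)) := by
      intro t
      induction t with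
      | zero => simp
      | tmul u v => simp [antipode_mul_antidistrib, hS]
      | add u v hu hv => simp only [add_mul, mul_add, map_add, hu, hv]
    simp [comul_antipode, h]
  have hass : ∀ t : A ⊗[k] A, (mulRight k (P ⊗ₜ[k] (1 : A)) ∘ₗ comul).rTensor A t =
      comul.rTensor A t * (P ⊗ₜ 1) ⊗ₜ 1 := by
    intro t
    induction t with
    | zero => simp
    | tmul u v => simp
    | add u v hu hv => simp only [add_mul, map_add, hu, hv]
  have hass' : ∀ t : A ⊗[k] (A ⊗[k] A), (TensorProduct.assoc k A A A).symm t * (P ⊗ₜ 1) ⊗ₜ 1 =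
      (TensorProduct.assoc k A A A).symm (t * P ⊗ₜ 1) := by
    intro t
    exact (map_mul (Algebra.TensorProduct.assoc k k k A A A).symm t (P ⊗ₜ 1)).symm
  have hlT : ∀ t : A ⊗[k] A, comul.lTensor A t * P ⊗ₜ 1 = comul.lTensor A (t * P ⊗ₜ[k] 1) := by
    intro t
    induction t with
    | zero => simp
    | tmul u v => simp
    | add u v hu hv => simp only [add_mul, map_add, hu, hv]
  rw [casimir, ← LinearMap.comp_apply, ← rTensor_comp, hcomp, rTensor_comp, LinearMap.comp_apply,
    hass, ← coassoc_symm_apply, hass', hlT, hl, lTensor_tmul, rTensor_assoc_symm_tmul, hS]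

/-- The second legs of `Δ(P)` satisfy the equation defining `N_P^r`. -/
lemma lTensor_comul_mul_comul (hP : IsRightGroupLikeProjection k P) :
    (mulRight k ((1 : A) ⊗ₜ[k] P) ∘ₗ comul).lTensor A (comul P) =
      ((TensorProduct.mk k A A).flip P).lTensor A (comul P) := by
  have hmul : ∀ t : A ⊗[k] A, (mulRight k ((1 : A) ⊗ₜ[k] P) ∘ₗ comul).lTensor A t =
      comul.lTensor A t * 1 ⊗ₜ (1 ⊗ₜ P) := by
    intro t
    induction t with
    | zero => simp
    | tmul u v => simp
    | add u v hu hv => simp only [add_mul, map_add, hu, hv]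
  have hassoc : ∀ t : (A ⊗[k] A) ⊗[k] A, TensorProduct.assoc k A A A t * 1 ⊗ₜ (1 ⊗ₜ P) =
      TensorProduct.assoc k A A A (t * (1 ⊗ₜ 1) ⊗ₜ P) := fun t =>
    (map_mul (Algebra.TensorProduct.assoc k k k A A A) t ((1 ⊗ₜ 1) ⊗ₜ P)).symm
  have hcomul : ∀ t : A ⊗[k] A, comul.rTensor A t * (1 ⊗ₜ 1) ⊗ₜ P =
      comul.rTensor A (t * 1 ⊗ₜ[k] P) := by
    intro t
    induction t with
    | zero => simp
    | tmul u v => simp [← Algebra.TensorProduct.one_def]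
    | add u v hu hv => simp only [add_mul, map_add, hu, hv]
  have hmk : ∀ t : A ⊗[k] A, TensorProduct.assoc k A A A (t ⊗ₜ P) =
      ((TensorProduct.mk k A A).flip P).lTensor A t := by
    intro t
    induction t with
    | zero => simp
    | tmul u v => simp
    | add u v hu hv => simp only [add_tmul, map_add, hu, hv]
  rw [hmul, ← coassoc_apply, hassoc, hcomul, hP.2.2.1, rTensor_tmul, hmk]

/-- The second legs of `Δ(P)` satisfy the equation defining `N_P^l`. -/
lemma lTensor_mul_comul_comul (hP : IsRightGroupLikeProjection k P) :
    (mulLeft k ((1 : A) ⊗ₜ[k] P) ∘ₗ comul).lTensor A (comul P) =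
      ((TensorProduct.mk k A A).flip P).lTensor A (comul P) := by
  have hmul : ∀ t : A ⊗[k] A, (mulLeft k ((1 : A) ⊗ₜ[k] P) ∘ₗ comul).lTensor A t =
      1 ⊗ₜ (1 ⊗ₜ P) * comul.lTensor A t := by
    intro t
    induction t with
    | zero => simp
    | tmul u v => simp
    | add u v hu hv => simp only [mul_add, map_add, hu, hv]
  have hassoc : ∀ t : (A ⊗[k] A) ⊗[k] A, 1 ⊗ₜ (1 ⊗ₜ P) * TensorProduct.assoc k A A A t =
      TensorProduct.assoc k A A A ((1 ⊗ₜ 1) ⊗ₜ P * t) := fun t =>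
    (map_mul (Algebra.TensorProduct.assoc k k k A A A) ((1 ⊗ₜ 1) ⊗ₜ P) t).symm
  have hcomul : ∀ t : A ⊗[k] A, (1 ⊗ₜ 1) ⊗ₜ P * comul.rTensor A t =
      comul.rTensor A (1 ⊗ₜ[k] P * t) := by
    intro t
    induction t with
    | zero => simp
    | tmul u v => simp [← Algebra.TensorProduct.one_def]
    | add u v hu hv => simp only [mul_add, map_add, hu, hv]
  have hmk : ∀ t : A ⊗[k] A, TensorProduct.assoc k A A A (t ⊗ₜ P) =
      ((TensorProduct.mk k A A).flip P).lTensor A t := by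
    intro t
    induction t with
    | zero => simp
    | tmul u v => simp
    | add u v hu hv => simp only [add_tmul, map_add, hu, hv]
  rw [hmul, ← coassoc_apply, hassoc, hcomul, hP.2.2.2, rTensor_tmul, hmk]

/-- Over a field, a tensor lying in the equalizer of linear maps on its first factor
can be expanded with first legs in that equalizer. -/
lemma exists_eq_sum_tmul_of_rTensor {K M V : Type*} [Field K] [AddCommGroup M] [Module K M]
    [AddCommGroup V] [Module K V] (t : M ⊗[K] V) :
    ∃ (s : Finset (Module.Free.ChooseBasisIndex K V)) (a : Module.Free.ChooseBasisIndex K V → M)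
      (b : Module.Free.ChooseBasisIndex K V → V), t = ∑ i ∈ s, a i ⊗ₜ b i ∧
      ∀ f g : M →ₗ[K] M ⊗[K] M, f.rTensor V t = g.rTensor V t → ∀ i, f (a i) = g (a i) := by
  let B := Module.Free.chooseBasis K V
  obtain ⟨a, ha⟩ := TensorProduct.eq_repr_basis_right B t
  refine ⟨a.support, a, B, ha.symm, fun f g h i => ?_⟩
  have h0 : (f - g).rTensor V t = 0 := by simp [rTensor_sub, h]
  rw [← ha, Finsupp.sum, map_sum] at h0
  have hzero := TensorProduct.sum_tmul_basis_right_eq_zero B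
    (a.mapRange (f - g) (map_zero _)) (by
      rw [Finsupp.sum_mapRange_index (by simp)]
      simpa only [Finsupp.sum, rTensor_tmul] using h0)
  simpa [sub_eq_zero] using DFunLike.congr_fun hzero i

lemma exists_casimir_eq_sum_left (hP : IsTwoSidedGroupLikeProjection k P) :
    ∃ (s : Finset (Module.Free.ChooseBasisIndex k A)) (a b : Module.Free.ChooseBasisIndex k A → A),
      (∀ i, a i ∈ NPSet k P) ∧ casimir k P = ∑ i ∈ s, a i ⊗ₜ b i := by
  obtain ⟨s, a, b, hab, h⟩ := exists_eq_sum_tmul_of_rTensor (casimir k P)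
  exact ⟨s, a, b, fun i => ⟨h _ _ (rTensor_mul_comul_casimir hP) i,
    h _ _ (rTensor_comul_mul_casimir hP) i⟩, hab⟩

lemma exists_casimir_eq_sum_right (hP : IsRightGroupLikeProjection k P) :
    ∃ (s : Finset (Module.Free.ChooseBasisIndex k A)) (a b : Module.Free.ChooseBasisIndex k A → A),
      (∀ i, b i ∈ NPSet k P) ∧ casimir k P = ∑ i ∈ s, a i ⊗ₜ b i := by
  obtain ⟨s, b, a, hab, h⟩ :=
    exists_eq_sum_tmul_of_rTensor (TensorProduct.comm k A A (comul P))
  have h' : ∀ f g : A →ₗ[k] A ⊗[k] A, f.lTensor A (comul P) = g.lTensor A (comul P) →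
      ∀ i, f (b i) = g (b i) := fun f g hfg => h f g (by
    simp only [← comm_comp_lTensor_comp_comm_eq, LinearMap.comp_apply, LinearEquiv.coe_coe,
      comm_comm, hfg])
  refine ⟨s, fun i => antipode k (a i), b, fun i => ⟨h' _ _ (lTensor_mul_comul_comul hP) i,
    h' _ _ (lTensor_comul_mul_comul hP) i⟩, ?_⟩
  rw [casimir, (LinearEquiv.eq_symm_apply _).mpr hab]
  simp

variable (k) in
/-- The subalgebra with underlying set `N_P`. -/
def NPSubalgebra (P : A) : Subalgebra k A where
  carrier := NPSet k P
  mul_mem' := by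
    rintro x y ⟨hxl, hxr⟩ ⟨hyl, hyr⟩
    simp only [NPlSet, NPrSet, Set.mem_ofPred_eq] at hxl hxr hyl hyr
    constructor
    · simp only [NPlSet, Set.mem_ofPred_eq, Bialgebra.comul_mul]
      rw [← mul_assoc, hxl, show x ⊗ₜ[k] P = (x ⊗ₜ 1) * (1 ⊗ₜ P) by simp, mul_assoc, hyl]
      simp
    · simp only [NPrSet, Set.mem_ofPred_eq, Bialgebra.comul_mul]
      rw [mul_assoc, hyr, show y ⊗ₜ[k] P = (1 ⊗ₜ P) * (y ⊗ₜ 1) by simp, ← mul_assoc, hxr]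
      simp
  add_mem' := by
    rintro x y ⟨hxl, hxr⟩ ⟨hyl, hyr⟩
    simp only [NPlSet, NPrSet, Set.mem_ofPred_eq] at hxl hxr hyl hyr
    constructor
    · simp only [NPlSet, Set.mem_ofPred_eq, map_add, mul_add, hxl, hyl, add_tmul]
    · simp only [NPrSet, Set.mem_ofPred_eq, map_add, add_mul, hxr, hyr, add_tmul]
  algebraMap_mem' := by
    intro r
    constructor <;>
    simp [NPlSet, NPrSet, Algebra.algebraMap_eq_smul_one, Algebra.TensorProduct.one_def,
      smul_tmul']

end GroupLikeProjection

/-- A subalgebra `N` of `B` is semisimple as soon as there is `e ∈ (N ⊗ B) ∩ (B ⊗ N)` with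
product `1` such that `(x ⊗ 1) e = e (1 ⊗ x)` for all `x ∈ N`. -/
lemma isSemisimpleRing_of_casimir {K B : Type*} [Field K] [Ring B] [Algebra K B]
    (N : Subalgebra K B) (e : B ⊗[K] B) (hone : mul' K B e = 1)
    (hcomm : ∀ x ∈ N, (x ⊗ₜ[K] 1) * e = e * (1 ⊗ₜ[K] x))
    {ι : Type*} (s : Finset ι) (a : ι → N) (b : ι → B) (hab : e = ∑ i ∈ s, (a i : B) ⊗ₜ b i)
    {κ : Type*} (t : Finset κ) (c : κ → B) (d : κ → N) (hcd : e = ∑ i ∈ t, c i ⊗ₜ (d i : B)) :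
    IsSemisimpleRing N := by
  refine { exists_isCompl := fun V => ?_ }
  let j : V →ₗ[K] B := N.val.toLinearMap ∘ₗ (V.subtype.restrictScalars K)
  have hj : Function.Injective j := fun x y h => Subtype.ext (Subtype.ext h)
  obtain ⟨π, hπ⟩ := j.exists_leftInverse_of_injective (LinearMap.ker_eq_bot.mpr hj)
  have hπj : ∀ v, π (j v) = v := fun v => LinearMap.congr_fun hπ v
  let T (y : B) : B ⊗[K] B →ₗ[K] B := mul' K B ∘ₗ (j ∘ₗ π ∘ₗ mulRight K y).lTensor B
  have hT : ∀ (y x : B) (t : B ⊗[K] B), T y ((x ⊗ₜ[K] 1) * t) = x * T y t := by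
    intro y x t
    induction t with
    | zero => simp
    | tmul u v => simp [T, mul_assoc]
    | add u v hu hv => simp only [mul_add, map_add, hu, hv]
  have hTe : ∀ y : N, j (∑ i ∈ s, a i • π (b i * y)) = T y e := by
    intro y
    simp [T, hab, j]
  let p : N →ₗ[N] V :=
    { toFun := fun y => ∑ i ∈ s, a i • π (b i * y)
      map_add' := fun y z => by simp [mul_add, Finset.sum_add_distrib]
      map_smul' := fun x y => by
        apply hj
        have h := congr(T y $(hcomm x x.2))
        rw [hT, ← hTe] at h
        simpa [T, hab, Finset.sum_mul, mul_assoc, j] using h.symm }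
  refine ⟨LinearMap.ker p, LinearMap.isCompl_of_proj (f := p) fun v => ?_⟩
  apply hj
  have hd : ∀ i, j (π (d i * j v)) = d i * j v := fun i => congr(j $(hπj (d i • v)))
  calc j (p v) = T (j v) e := hTe v
    _ = mul' K B e * j v := by
      rw [hcd]
      simp only [map_sum, Finset.sum_mul]
      exact Finset.sum_congr rfl fun i _ => by simp [T, hd, mul_assoc]
    _ = j v := by rw [hone, one_mul]

/-- Theorem: for a two-sided group-like projection `P`, the left coideal subalgebra
`N_P` is a semisimple ring. -/
theorem statement6
    (hS : Function.Bijective (HopfAlgebra.antipode (R := k) : A →ₗ[k] A))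
    (P : A) (hP : IsTwoSidedGroupLikeProjection k P) :
    ∃ N : Subalgebra k A, (N : Set A) = NPSet k P ∧ IsSemisimpleRing N := by
  obtain ⟨s, a, b, ha, hab⟩ := exists_casimir_eq_sum_left hP
  obtain ⟨t, c, d, hd, hcd⟩ := exists_casimir_eq_sum_right hP.1
  exact ⟨NPSubalgebra k P, rfl, isSemisimpleRing_of_casimir _ (casimir k P)
    (mul'_casimir hP.1) (fun x hx => tmul_one_mul_casimir hx.1)
    s (fun i => ⟨a i, ha i⟩) b hab t c (fun i => ⟨d i, hd i⟩) hcd⟩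
end
end

section
/- Let A be a Hopf algebra over a field k with bijective antipode and let N ⊆ A be a left coideal subalgebra which is a semisimple ring. Then there exists a right group-like projection P ∈ A such that N = N_P, and moreover N_P = V_P. -/
open scoped TensorProduct

noncomputable section

variable (k : Type*) [Field k] {A : Type*} [Ring A] [HopfAlgebra k A]

/-- Slicing the left leg by functionals separates the points of `A ⊗ A`. -/
theorem eq_zero_of_forall_slice_eq_zero (t : A ⊗[k] A)
    (h : ∀ μ : A →ₗ[k] k, TensorProduct.lid k A (TensorProduct.map μ LinearMap.id t) = 0) :
    t = 0 := by
  classical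
  let b := Module.Basis.ofVectorSpace k A
  apply (TensorProduct.equivFinsuppOfBasisLeft b).injective
  ext i
  rw [TensorProduct.equivFinsuppOfBasisLeft_apply, map_zero, Finsupp.zero_apply]
  exact h (b.coord i)

/-- The linear map `a ⊗ b ↦ (S(a) ⊗ 1)Δ(b)`. -/
def antipodeMulComul : A ⊗[k] A →ₗ[k] A ⊗[k] A :=
  TensorProduct.lift
    ((LinearMap.mul k (A ⊗[k] A)).compl₁₂
      ((Algebra.TensorProduct.includeLeft (R := k) (S := k) (A := A) (B := A)).toLinearMap ∘ₗ
        HopfAlgebra.antipode k)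
      (Coalgebra.comul (R := k)))

theorem antipodeMulComul_tmul (a b : A) :
    antipodeMulComul k (a ⊗ₜ[k] b) =
      (HopfAlgebra.antipode k a ⊗ₜ[k] (1 : A)) * Coalgebra.comul (R := k) b := rfl

theorem antipodeMulComul_mul (t : A ⊗[k] A) (p : A) :
    antipodeMulComul k (t * ((1 : A) ⊗ₜ[k] p)) =
      antipodeMulComul k t * Coalgebra.comul (R := k) p := by
  induction t with
  | zero => simp
  | add x y hx hy => simp [add_mul, hx, hy]
  | tmul x y =>
    simp [antipodeMulComul_tmul, mul_assoc]

theorem antipodeMulComul_comul (x : A) :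
    antipodeMulComul k (Coalgebra.comul (R := k) x) = (1 : A) ⊗ₜ[k] x := by
  have h1 : antipodeMulComul k (A := A) =
      (LinearMap.rTensor A (LinearMap.mul' k A ∘ₗ (HopfAlgebra.antipode k).rTensor A)) ∘ₗ
        (TensorProduct.assoc k A A A).symm.toLinearMap ∘ₗ
          (Coalgebra.comul (R := k)).lTensor A := by
    ext a b
    simp only [TensorProduct.AlgebraTensorModule.curry_apply, TensorProduct.curry_apply,
      LinearMap.coe_restrictScalars, LinearMap.comp_apply, LinearMap.lTensor_tmul,
      antipodeMulComul_tmul, LinearEquiv.coe_coe]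
    induction Coalgebra.comul (R := k) b with
    | zero => simp
    | add x y hx hy => simp [mul_add, TensorProduct.tmul_add, hx, hy]
    | tmul x y => simp
  rw [h1]
  simp only [LinearMap.comp_apply, LinearEquiv.coe_coe, Coalgebra.coassoc_symm_apply]
  rw [← LinearMap.comp_apply, ← LinearMap.rTensor_comp, LinearMap.comp_assoc,
    HopfAlgebra.mul_antipode_rTensor_comul, LinearMap.rTensor_comp, LinearMap.comp_apply,
    Coalgebra.rTensor_counit_comul]
  simp

/-- The strong invariance identity `(1 ⊗ x)Δ(p) = S(x₁)x₂p₁ ⊗ x₃p₂`. -/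
theorem antipodeMulComul_comul_mul (x p : A) :
    antipodeMulComul k (Coalgebra.comul (R := k) x * ((1 : A) ⊗ₜ[k] p)) =
      ((1 : A) ⊗ₜ[k] x) * Coalgebra.comul (R := k) p := by
  rw [antipodeMulComul_mul, antipodeMulComul_comul]

theorem slice_mul_left (μ : A →ₗ[k] k) (a : A) (t : A ⊗[k] A) :
    TensorProduct.lid k A (TensorProduct.map μ LinearMap.id (((1 : A) ⊗ₜ[k] a) * t)) =
      a * TensorProduct.lid k A (TensorProduct.map μ LinearMap.id t) := by
  induction t with
  | zero => simp
  | add x y hx hy => simp [mul_add, hx, hy]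
  | tmul x y => simp

theorem slice_mul_right (μ : A →ₗ[k] k) (a : A) (t : A ⊗[k] A) :
    TensorProduct.lid k A (TensorProduct.map μ LinearMap.id (t * ((1 : A) ⊗ₜ[k] a))) =
      TensorProduct.lid k A (TensorProduct.map μ LinearMap.id t) * a := by
  induction t with
  | zero => simp
  | add x y hx hy => simp [add_mul, hx, hy]
  | tmul x y => simp

theorem slice_mul_tmul_one (μ : A →ₗ[k] k) (a : A) (t : A ⊗[k] A) :
    TensorProduct.lid k A (TensorProduct.map μ LinearMap.id ((a ⊗ₜ[k] (1 : A)) * t)) =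
      TensorProduct.lid k A
        (TensorProduct.map (μ ∘ₗ LinearMap.mulLeft k a) LinearMap.id t) := by
  induction t with
  | zero => simp
  | add x y hx hy => simp [mul_add, hx, hy]
  | tmul x y => simp

/-- `V_P` is stable under left multiplication by `N_P^r`. -/
theorem mul_mem_VPSet {P x v : A} (hx : x ∈ NPrSet k P) (hv : v ∈ VPSet k P) :
    x * v ∈ VPSet k P := by
  obtain ⟨μ, rfl⟩ := hv
  refine ⟨μ ∘ₗ LinearMap.mulLeft k (HopfAlgebra.antipode k x), ?_⟩
  rw [← slice_mul_left, ← slice_mul_tmul_one, ← antipodeMulComul_comul_mul,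
    show _ * _ = _ from hx, antipodeMulComul_tmul]

theorem add_mem_VPSet {P v w : A} (hv : v ∈ VPSet k P) (hw : w ∈ VPSet k P) :
    v + w ∈ VPSet k P := by
  obtain ⟨μ, rfl⟩ := hv
  obtain ⟨ν, rfl⟩ := hw
  exact ⟨μ + ν, by simp [TensorProduct.map_add_left]⟩

theorem zero_mem_VPSet (P : A) : (0 : A) ∈ VPSet k P := ⟨0, by simp⟩

/-- An element acting as a right identity on `V_P` is `1` when `ε(P) = 1`. -/
theorem eq_one_of_forall_mem_VPSet_mul_eq {P f : A} (hP : Coalgebra.counit (R := k) P = 1)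
    (hf : ∀ v ∈ VPSet k P, v * f = v) : f = 1 := by
  have h0 : Coalgebra.comul (R := k) P * ((1 : A) ⊗ₜ[k] (1 - f)) = 0 := by
    refine eq_zero_of_forall_slice_eq_zero k _ fun μ => ?_
    rw [slice_mul_right, mul_sub, mul_one, hf _ ⟨μ, rfl⟩, sub_self]
  have h1 : ((1 : A) ⊗ₜ[k] P) * Coalgebra.comul (R := k) (1 - f) = 0 := by
    rw [← antipodeMulComul_comul_mul, h0, map_zero]
  have h2 : ∀ t : A ⊗[k] A,
      (Coalgebra.counit (R := k)).lTensor A (((1 : A) ⊗ₜ[k] P) * t) =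
        (Coalgebra.counit (R := k)).lTensor A t := by
    intro t
    induction t with
    | zero => simp
    | add x y hx hy => simp [mul_add, hx, hy]
    | tmul x y => simp [hP]
  have h3 := h2 (Coalgebra.comul (R := k) (1 - f))
  rw [h1, map_zero, Coalgebra.lTensor_counit_comul] at h3
  have h4 := congrArg (TensorProduct.rid k A) h3
  rw [map_zero, TensorProduct.rid_tmul, one_smul] at h4
  exact (sub_eq_zero.mp h4.symm).symm

theorem IsSemisimpleRing.exists_mem_mul_eq {R : Type*} [Ring R] [IsSemisimpleRing R]
    (I : Ideal R) : ∃ e ∈ I, ∀ v ∈ I, v * e = v := by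
  obtain ⟨e, he, rfl⟩ := IsSemisimpleRing.ideal_eq_span_idempotent I
  refine ⟨e, Ideal.mem_span_singleton_self e, fun v hv => ?_⟩
  obtain ⟨a, rfl⟩ := Ideal.mem_span_singleton'.mp hv
  rw [mul_assoc, he.eq]

/-- A character of a semisimple algebra is afforded by a central idempotent. -/
theorem IsSemisimpleRing.exists_mul_eq_smul {R : Type*} [Ring R] [Algebra k R]
    [IsSemisimpleRing R] (χ : R →ₐ[k] k) :
    ∃ p : R, χ p = 1 ∧ (∀ x, x * p = χ x • p) ∧ ∀ x, p * x = χ x • p := by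
  obtain ⟨e, he, hemul⟩ := IsSemisimpleRing.exists_mem_mul_eq (RingHom.ker χ)
  rw [RingHom.mem_ker] at he
  have hker : ∀ x, χ x = 0 → x * (1 - e) = 0 := fun x hx => by
    rw [mul_sub, mul_one, hemul x hx, sub_self]
  have hker' : ∀ x, χ x = 0 → (1 - e) * x = 0 := by
    intro x hx
    obtain ⟨f, hf, hfmul⟩ := IsSemisimpleRing.exists_mem_mul_eq (Ideal.span {(1 - e) * x})
    obtain ⟨n, rfl⟩ := Ideal.mem_span_singleton'.mp hf
    rw [← hfmul _ (Ideal.mem_span_singleton_self _)]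
    have h := hker (x * n) (by simp [hx])
    calc (1 - e) * x * (n * ((1 - e) * x)) = (1 - e) * (x * n * (1 - e)) * x := by
          simp only [mul_assoc]
      _ = 0 := by rw [h, mul_zero, zero_mul]
  refine ⟨1 - e, by simp [he], fun x => ?_, fun x => ?_⟩
  · have h := hker (x - algebraMap k R (χ x)) (by simp)
    rwa [sub_mul, sub_eq_zero, ← Algebra.smul_def] at h
  · have h := hker' (x - algebraMap k R (χ x)) (by simp)
    rwa [mul_sub, sub_eq_zero, ← Algebra.commutes, ← Algebra.smul_def] at h

theorem mem_NPSet_of_isLeftCoideal {N : Submodule k A} (hN : IsLeftCoideal k N) {P : A}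
    (hr : ∀ x ∈ N, x * P = Coalgebra.counit (R := k) x • P)
    (hl : ∀ x ∈ N, P * x = Coalgebra.counit (R := k) x • P) {x : A} (hx : x ∈ N) :
    x ∈ NPSet k P := by
  have hslice : TensorProduct.rid k A
      ((Coalgebra.counit (R := k)).lTensor A (Coalgebra.comul (R := k) x)) = x := by simp
  obtain ⟨t, ht⟩ := hN x hx
  have key : ∀ t : A ⊗[k] N,
      ((1 : A) ⊗ₜ[k] P) * TensorProduct.map (LinearMap.id : A →ₗ[k] A) N.subtype t =
        TensorProduct.rid k A ((Coalgebra.counit (R := k)).lTensor A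
          (TensorProduct.map (LinearMap.id : A →ₗ[k] A) N.subtype t)) ⊗ₜ[k] P ∧
      TensorProduct.map (LinearMap.id : A →ₗ[k] A) N.subtype t * ((1 : A) ⊗ₜ[k] P) =
        TensorProduct.rid k A ((Coalgebra.counit (R := k)).lTensor A
          (TensorProduct.map (LinearMap.id : A →ₗ[k] A) N.subtype t)) ⊗ₜ[k] P := by
    intro t
    induction t with
    | zero => simp
    | add a b ha hb =>
      simp only [map_add, mul_add, add_mul, TensorProduct.add_tmul, ha.1, ha.2, hb.1, hb.2,
        and_self]
    | tmul a b => simp [hr b b.2, hl b b.2, TensorProduct.smul_tmul]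
  have h := key t
  rw [ht, hslice] at h
  exact h

theorem VPSet_subset_of_isLeftCoideal {N : Submodule k A} (hN : IsLeftCoideal k N) {P : A}
    (hP : P ∈ N) : VPSet k P ⊆ N := by
  rintro _ ⟨μ, rfl⟩
  obtain ⟨t, ht⟩ := hN P hP
  rw [← ht]
  clear ht
  induction t with
  | zero => simp
  | add a b ha hb => simpa using N.add_mem ha hb
  | tmul a b => simpa using N.smul_mem (μ a) b.2

/-- Theorem: a semisimple left coideal subalgebra `N ⊆ A` equals `N_P` for some right
group-like projection `P`, and moreover `N_P = V_P`. -/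
theorem statement7
    (hS : Function.Bijective (HopfAlgebra.antipode (R := k) : A →ₗ[k] A))
    (N : Subalgebra k A) (hN : IsLeftCoidealSubalgebra k N) (hss : IsSemisimpleRing N) :
    ∃ P : A, IsRightGroupLikeProjection k P ∧ (N : Set A) = NPSet k P ∧
      NPSet k P = VPSet k P := by
  obtain ⟨p, hp1, hr, hl⟩ := IsSemisimpleRing.exists_mul_eq_smul k
    ((Bialgebra.counitAlgHom k A).comp N.val)
  have hcounit : Coalgebra.counit (R := k) (p : A) = 1 := hp1
  have hN_sub : (N : Set A) ⊆ NPSet k (p : A) := fun x hx =>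
    mem_NPSet_of_isLeftCoideal k hN
      (fun y hy => congrArg Subtype.val (hr ⟨y, hy⟩))
      (fun y hy => congrArg Subtype.val (hl ⟨y, hy⟩)) hx
  have hV_sub : VPSet k (p : A) ⊆ N := VPSet_subset_of_isLeftCoideal k hN p.2
  have hone : (1 : A) ∈ VPSet k (p : A) := by
    let V : Ideal N :=
      { carrier := {n | (n : A) ∈ VPSet k (p : A)}
        add_mem' := fun ha hb => add_mem_VPSet k ha hb
        zero_mem' := zero_mem_VPSet k _
        smul_mem' := fun n _ hv => mul_mem_VPSet k (hN_sub n.2).2 hv }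
    obtain ⟨f, hf, hfmul⟩ := IsSemisimpleRing.exists_mem_mul_eq V
    have hf_one : (f : A) = 1 := eq_one_of_forall_mem_VPSet_mul_eq k hcounit fun v hv =>
      congrArg Subtype.val (hfmul ⟨v, hV_sub hv⟩ hv)
    exact hf_one ▸ hf
  have hNP_sub : NPSet k (p : A) ⊆ VPSet k (p : A) := fun x hx => by
    simpa using mul_mem_VPSet k hx.2 hone
  refine ⟨p, ⟨?_, ?_, (hN_sub p.2).2, (hN_sub p.2).1⟩,
    hN_sub.antisymm (hNP_sub.trans hV_sub), hNP_sub.antisymm (hV_sub.trans hN_sub)⟩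
  · intro h
    rw [h, map_zero] at hcounit
    exact zero_ne_one hcounit
  · have h := hr p
    rw [hp1, one_smul] at h
    exact congrArg Subtype.val h
end
end

section
/- Let A be a Hopf algebra over a field k with bijective antipode, P ∈ A a right group-like projection and N ⊆ A a left coideal subalgebra such that P ∈ N and xP = Px = ε(x)P for all x ∈ N (i.e. P is a counital two-sided integral for N). Then N ⊆ N_P; that is, N_P is the maximal left coideal subalgebra for which P is a counital two-sided integral. -/
open scoped TensorProduct

noncomputable section

variable (k : Type*) [Field k] {A : Type*} [Ring A] [HopfAlgebra k A]

variable {k} in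
/-- If `f` agrees with `counit • P` on a left coideal `N`, then `id ⊗ f` sends `Δ(x)` to `x ⊗ P`
for every `x ∈ N`. -/
theorem lTensor_comul_of_eq_counit_smul {N : Submodule k A} (hN : IsLeftCoideal k N) {P : A}
    {f : A →ₗ[k] A} (hf : ∀ y ∈ N, f y = Coalgebra.counit (R := k) y • P) {x : A} (hx : x ∈ N) :
    f.lTensor A (Coalgebra.comul (R := k) x) = x ⊗ₜ[k] P := by
  obtain ⟨t, ht⟩ := hN x hx
  have hfN : f ∘ₗ N.subtype =
      (LinearMap.toSpanSingleton k A P ∘ₗ Coalgebra.counit (R := k)) ∘ₗ N.subtype :=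
    LinearMap.ext fun y => hf y y.2
  have key : f.lTensor A (Coalgebra.comul (R := k) x) =
      (LinearMap.toSpanSingleton k A P ∘ₗ Coalgebra.counit (R := k)).lTensor A
        (Coalgebra.comul (R := k) x) := by
    rw [← ht]
    change f.lTensor A (N.subtype.lTensor A t) =
      LinearMap.lTensor A _ (N.subtype.lTensor A t)
    rw [← LinearMap.lTensor_comp_apply, ← LinearMap.lTensor_comp_apply, hfN]
  rw [key, LinearMap.lTensor_comp_apply, Coalgebra.lTensor_counit_comul]
  simp

/-- Theorem: if `N` is a left coideal subalgebra for which the right group-like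
projection `P` is a counital two-sided integral, then `N ⊆ N_P`. -/
theorem statement12
    (hS : Function.Bijective (HopfAlgebra.antipode (R := k) : A →ₗ[k] A))
    (P : A) (hP : IsRightGroupLikeProjection k P)
    (N : Subalgebra k A) (hN : IsLeftCoidealSubalgebra k N) (hPN : P ∈ N)
    (hint : ∀ x ∈ N, x * P = Coalgebra.counit (R := k) x • P ∧
      P * x = Coalgebra.counit (R := k) x • P) :
    (N : Set A) ⊆ NPSet k P := by
  intro x hx
  have hleft : ∀ t : A ⊗[k] A,
      ((1 : A) ⊗ₜ[k] P) * t = (LinearMap.mulLeft k P).lTensor A t := fun t => by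
    induction t with
    | zero => simp
    | tmul a b => simp
    | add a b ha hb => rw [mul_add, ha, hb, map_add]
  have hright : ∀ t : A ⊗[k] A,
      t * ((1 : A) ⊗ₜ[k] P) = (LinearMap.mulRight k P).lTensor A t := fun t => by
    induction t with
    | zero => simp
    | tmul a b => simp
    | add a b ha hb => rw [add_mul, ha, hb, map_add]
  exact ⟨(hleft _).trans (lTensor_comul_of_eq_counit_smul hN (fun y hy => (hint y hy).2) hx),
    (hright _).trans (lTensor_comul_of_eq_counit_smul hN (fun y hy => (hint y hy).1) hx)⟩
end
end

section
/- Let A be a Hopf algebra over a field k with bijective antipode S, let P be a right group-like projection and Q a right shift of P (i.e. a nonzero idempotent with Δ(Q)(1 ⊗ Q) = P ⊗ Q = (1 ⊗ Q)Δ(Q)). Then P is a two-sided group-like projection if and only if S²(Q) = Q; and in that case there exists a two-sided group-like projection P̃ such that Q is a left shift of P̃, i.e. Δ(Q)(Q ⊗ 1) = Q ⊗ P̃ = (Q ⊗ 1)Δ(Q). -/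
open scoped TensorProduct

noncomputable section

variable (k : Type*) [Field k] {A : Type*} [Ring A] [HopfAlgebra k A]

namespace HopfAlgebra

open Coalgebra WithConv

section Convolution

variable (A)

/-- The linear map `x ↦ x ⊗ 1`. -/
def inclL : A →ₗ[k] A ⊗[k] A :=
  (Algebra.TensorProduct.includeLeft : A →ₐ[k] A ⊗[k] A).toLinearMap

/-- The linear map `x ↦ 1 ⊗ x`. -/
def inclR : A →ₗ[k] A ⊗[k] A :=
  (Algebra.TensorProduct.includeRight : A →ₐ[k] A ⊗[k] A).toLinearMap

variable {A}

@[simp] lemma inclL_apply (x : A) : inclL k A x = x ⊗ₜ 1 := rfl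

@[simp] lemma inclR_apply (x : A) : inclR k A x = 1 ⊗ₜ x := rfl

lemma inclL_convMul_inclR_comp (f : A →ₗ[k] A) :
    toConv (inclL k A) * toConv (inclR k A ∘ₗ f) = toConv (f.lTensor A ∘ₗ comul) := by
  ext x
  rw [(ℛ k x).convMul_apply]
  simp [← (ℛ k x).eq]

lemma inclL_convMul_inclR : toConv (inclL k A) * toConv (inclR k A) = toConv comul := by
  simpa using inclL_convMul_inclR_comp k (A := A) LinearMap.id

lemma algHom_comp_antipode_convMul {B : Type*} [Ring B] [Algebra k B] (h : A →ₐ[k] B) :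
    toConv (h.toLinearMap ∘ₗ antipode k) * toConv h.toLinearMap = 1 := by
  have := LinearMap.algHom_comp_convMul_distrib h (toConv (antipode k)) (toConv LinearMap.id)
  rw [LinearMap.antipode_mul_id] at this
  apply WithConv.ofConv_injective
  simp only [LinearMap.comp_id] at this
  rw [← this]
  ext
  simp [LinearMap.convOne_def]

lemma algHom_convMul_comp_antipode {B : Type*} [Ring B] [Algebra k B] (h : A →ₐ[k] B) :
    toConv h.toLinearMap * toConv (h.toLinearMap ∘ₗ antipode k) = 1 := by
  have := LinearMap.algHom_comp_convMul_distrib h (toConv LinearMap.id) (toConv (antipode k))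
  rw [LinearMap.id_mul_antipode] at this
  apply WithConv.ofConv_injective
  simp only [LinearMap.comp_id] at this
  rw [← this]
  ext
  simp [LinearMap.convOne_def]

/-- The anti-multiplicative map `x ⊗ y ↦ S y ⊗ S x`. -/
def antipodeSwap : A ⊗[k] A →ₗ[k] A ⊗[k] A :=
  TensorProduct.map (antipode k) (antipode k) ∘ₗ (TensorProduct.comm k A A).toLinearMap

@[simp] lemma antipodeSwap_tmul (x y : A) :
    antipodeSwap k (x ⊗ₜ[k] y) = antipode k y ⊗ₜ antipode k x := rfl

lemma antipodeSwap_mul (u v : A ⊗[k] A) :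
    antipodeSwap k (u * v) = antipodeSwap k v * antipodeSwap k u := by
  induction u with
  | zero => simp
  | add u₁ u₂ h₁ h₂ => rw [add_mul, map_add, h₁, h₂, map_add, mul_add]
  | tmul a b =>
    induction v with
    | zero => simp
    | add v₁ v₂ h₁ h₂ => rw [mul_add, map_add, h₁, h₂, map_add, add_mul]
    | tmul c d => simp [antipode_mul_antidistrib]

lemma comul_antipode (x : A) :
    comul (R := k) (antipode k x) = antipodeSwap k (comul x) := by
  have hG : toConv (inclR k A ∘ₗ antipode k) * toConv (inclL k A ∘ₗ antipode k) =
      toConv (antipodeSwap k ∘ₗ comul) := by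
    ext x
    rw [(ℛ k x).convMul_apply]
    simp [← (ℛ k x).eq]
  have hinv : toConv (antipodeSwap k ∘ₗ comul) * toConv (comul (R := k) (A := A)) = 1 := by
    rw [← hG, ← inclL_convMul_inclR, mul_assoc, ← mul_assoc (toConv (inclL k A ∘ₗ antipode k)),
      inclL, algHom_comp_antipode_convMul, one_mul, inclR, algHom_comp_antipode_convMul]
  have := left_inv_eq_right_inv hinv (LinearMap.comul_right_inv (R := k) (C := A))
  exact (LinearMap.congr_fun (congrArg WithConv.ofConv this) x).symm

lemma comul_antipode_antipode (x : A) :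
    comul (R := k) (antipode k (antipode k x)) = antipodeSwap k (antipodeSwap k (comul x)) := by
  rw [comul_antipode, comul_antipode]

/-- Applying `f` and `g` to the legs of `Δ(x)(1 ⊗ y) = p ⊗ z` and multiplying. -/
lemma convMul_apply_mul_of_comul_mul {B : Type*} [Ring B] [Algebra k B] {x y p z : A} {w : B}
    (h : comul (R := k) x * ((1 : A) ⊗ₜ[k] y) = p ⊗ₜ z) (f g : A →ₗ[k] B)
    (hg : ∀ a, g (a * y) = g a * w) :
    (toConv f * toConv g) x * w = f p * g z := by
  have := congrArg (LinearMap.mul' k B ∘ₗ TensorProduct.map f g) h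
  rw [← (ℛ k x).eq, Finset.sum_mul] at this
  rw [(ℛ k x).convMul_apply, Finset.sum_mul]
  simpa [hg, mul_assoc] using this

/-- Applying `f` and `g` to the legs of `(1 ⊗ y)Δ(x) = p ⊗ z` and multiplying, for `g`
reversing the product with `y`. -/
lemma convMul_apply_mul_of_mul_comul {B : Type*} [Ring B] [Algebra k B] {x y p z : A} {w : B}
    (h : ((1 : A) ⊗ₜ[k] y) * comul (R := k) x = p ⊗ₜ z) (f g : A →ₗ[k] B)
    (hg : ∀ a, g (y * a) = g a * w) :
    (toConv f * toConv g) x * w = f p * g z := by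
  have := congrArg (LinearMap.mul' k B ∘ₗ TensorProduct.map f g) h
  rw [← (ℛ k x).eq, Finset.mul_sum] at this
  rw [(ℛ k x).convMul_apply, Finset.sum_mul]
  simpa [hg, mul_assoc] using this

/-- Applying `f` and `g` to the legs of `(y ⊗ 1)Δ(x) = z ⊗ p` and multiplying. -/
lemma mul_convMul_apply_of_mul_comul {B : Type*} [Ring B] [Algebra k B] {x y p z : A} {w : B}
    (h : (y ⊗ₜ[k] (1 : A)) * comul (R := k) x = z ⊗ₜ p) (f g : A →ₗ[k] B)
    (hf : ∀ a, f (y * a) = w * f a) :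
    w * (toConv f * toConv g) x = f z * g p := by
  have := congrArg (LinearMap.mul' k B ∘ₗ TensorProduct.map f g) h
  rw [← (ℛ k x).eq, Finset.mul_sum] at this
  rw [(ℛ k x).convMul_apply, Finset.mul_sum]
  simpa [hf, mul_assoc] using this

end Convolution

variable {k}

lemma tmul_left_cancel {B C : Type*} [AddCommGroup B] [Module k B] [AddCommGroup C] [Module k C]
    {q : B} (hq : q ≠ 0) {a b : C} (h : q ⊗ₜ[k] a = q ⊗ₜ[k] b) : a = b := by
  obtain ⟨φ, hφ⟩ := Module.Projective.exists_dual_ne_zero k hq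
  have := congrArg ((TensorProduct.lid k C).toLinearMap ∘ₗ φ.rTensor C) h
  simpa [hφ] using this

lemma tmul_right_cancel {B C : Type*} [AddCommGroup B] [Module k B] [AddCommGroup C] [Module k C]
    {q : B} (hq : q ≠ 0) {a b : C} (h : a ⊗ₜ[k] q = b ⊗ₜ[k] q) : a = b :=
  tmul_left_cancel hq (by simpa using congrArg (TensorProduct.comm k C B) h)

section GroupLikeProjection

variable {P : A}

lemma counit_mul_of_comul_mul (hP2 : P * P = P)
    (h : comul (R := k) P * ((1 : A) ⊗ₜ[k] P) = P ⊗ₜ P) :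
    algebraMap k A (counit (R := k) P) * P = P := by
  have := convMul_apply_mul_of_comul_mul k h (1 : WithConv (A →ₗ[k] A)).ofConv
    LinearMap.id (fun _ => rfl)
  simpa [hP2] using this.symm

lemma mul_counit_of_mul_comul (hP2 : P * P = P)
    (h : (P ⊗ₜ[k] (1 : A)) * comul (R := k) P = P ⊗ₜ P) :
    P * algebraMap k A (counit (R := k) P) = P := by
  have := mul_convMul_apply_of_mul_comul k h LinearMap.id
    (1 : WithConv (A →ₗ[k] A)).ofConv (fun _ => rfl)
  simpa [hP2] using this.symm

lemma _root_.IsRightGroupLikeProjection.antipode_mul_self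
    (hP : IsRightGroupLikeProjection k P) : antipode k P * P = P := by
  obtain ⟨-, h2, h3, h4⟩ := hP
  have := convMul_apply_mul_of_comul_mul k h3 (antipode k) LinearMap.id (fun _ => rfl)
  simpa [LinearMap.antipode_mul_id, counit_mul_of_comul_mul h2 h3] using this.symm

lemma _root_.IsRightGroupLikeProjection.mul_antipode_self
    (hP : IsRightGroupLikeProjection k P) : P * antipode k P = antipode k P := by
  obtain ⟨-, h2, h3, h4⟩ := hP
  have := convMul_apply_mul_of_mul_comul k h4 LinearMap.id (antipode k)
    (fun _ => antipode_mul_antidistrib _ _)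
  have e := congrArg (antipode k) (counit_mul_of_comul_mul h2 h3)
  rw [← Algebra.smul_def, map_smul, Algebra.smul_def] at e
  simpa [LinearMap.id_mul_antipode, e] using this.symm

lemma _root_.IsLeftGroupLikeProjection.mul_antipode_self
    (hP : IsLeftGroupLikeProjection k P) : P * antipode k P = P := by
  obtain ⟨-, h2, -, h4⟩ := hP
  have := mul_convMul_apply_of_mul_comul k h4 LinearMap.id (antipode k) (fun _ => rfl)
  simpa [LinearMap.id_mul_antipode, mul_counit_of_mul_comul h2 h4] using this.symm

lemma _root_.IsRightGroupLikeProjection.isLeft_of_antipode_eq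
    (hP : IsRightGroupLikeProjection k P) (hS : antipode k P = P) :
    IsLeftGroupLikeProjection k P := by
  obtain ⟨h1, h2, h3, h4⟩ := hP
  refine ⟨h1, h2, ?_, ?_⟩
  · simpa [antipodeSwap_mul, ← comul_antipode, hS] using congrArg (antipodeSwap k) h4
  · simpa [antipodeSwap_mul, ← comul_antipode, hS] using congrArg (antipodeSwap k) h3

lemma _root_.IsLeftGroupLikeProjection.isRight_of_antipode_eq
    (hP : IsLeftGroupLikeProjection k P) (hS : antipode k P = P) :
    IsRightGroupLikeProjection k P := by
  obtain ⟨h1, h2, h3, h4⟩ := hP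
  refine ⟨h1, h2, ?_, ?_⟩
  · simpa [antipodeSwap_mul, ← comul_antipode, hS] using congrArg (antipodeSwap k) h4
  · simpa [antipodeSwap_mul, ← comul_antipode, hS] using congrArg (antipodeSwap k) h3

lemma _root_.IsTwoSidedGroupLikeProjection.antipode_eq_s13
    (hP : IsTwoSidedGroupLikeProjection k P) : antipode k P = P :=
  hP.1.mul_antipode_self.symm.trans hP.2.mul_antipode_self

lemma _root_.IsRightGroupLikeProjection.antipode_eq_s13
    (hP : IsRightGroupLikeProjection k P) (hS : antipode k (antipode k P) = P) :
    antipode k P = P := by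
  have h := congrArg (antipode k) hP.antipode_mul_self
  rw [antipode_mul_antidistrib, hS, hP.antipode_mul_self] at h
  exact h.symm

lemma _root_.IsLeftGroupLikeProjection.antipode_eq_s13
    (hP : IsLeftGroupLikeProjection k P) (hS : antipode k (antipode k P) = P) :
    antipode k P = P := by
  have h := congrArg (antipode k) hP.mul_antipode_self
  rw [antipode_mul_antidistrib, hS, hP.mul_antipode_self] at h
  exact h.symm

end GroupLikeProjection

section Shift

variable {P Q : A}

lemma lTensor_antipode_comul_mul_of_shift
    (h : comul (R := k) Q * ((1 : A) ⊗ₜ[k] Q) = P ⊗ₜ Q) :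
    (antipode k).lTensor A (comul P) * ((1 : A) ⊗ₜ[k] Q) = Q ⊗ₜ Q := by
  have := convMul_apply_mul_of_comul_mul k h ((antipode k).lTensor A ∘ₗ comul) (inclR k A)
    (w := 1 ⊗ₜ Q) (by simp)
  rw [← inclL_convMul_inclR_comp, mul_assoc, inclR, algHom_comp_antipode_convMul, mul_one] at this
  simpa using this.symm

lemma comul_mul_antipode_of_shift
    (h : ((1 : A) ⊗ₜ[k] Q) * comul (R := k) Q = P ⊗ₜ Q) :
    comul P * ((1 : A) ⊗ₜ[k] antipode k Q) = Q ⊗ₜ antipode k Q := by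
  have := convMul_apply_mul_of_mul_comul k h comul (inclR k A ∘ₗ antipode k)
    (w := 1 ⊗ₜ antipode k Q) (by simp [antipode_mul_antidistrib])
  rw [← inclL_convMul_inclR, mul_assoc, inclR, algHom_convMul_comp_antipode, mul_one] at this
  simpa using this.symm

lemma antipode_antipode_of_right_shift
    (hQ0 : Q ≠ 0)
    (h : comul (R := k) Q * ((1 : A) ⊗ₜ[k] Q) = P ⊗ₜ Q)
    (hQ : antipode k (antipode k Q) = Q) : antipode k (antipode k P) = P := by
  have := congrArg (fun u => antipodeSwap k (antipodeSwap k u)) h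
  simp only [antipodeSwap_mul, ← comul_antipode, antipodeSwap_tmul, hQ, antipode_one] at this
  rw [h] at this
  exact (tmul_right_cancel hQ0 this).symm

lemma antipode_antipode_of_left_shift
    (hQ0 : Q ≠ 0)
    (h : comul (R := k) Q * (Q ⊗ₜ[k] (1 : A)) = Q ⊗ₜ P)
    (hQ : antipode k (antipode k Q) = Q) : antipode k (antipode k P) = P := by
  have := congrArg (fun u => antipodeSwap k (antipodeSwap k u)) h
  simp only [antipodeSwap_mul, ← comul_antipode, antipodeSwap_tmul, hQ, antipode_one] at this
  rw [h] at this
  exact (tmul_left_cancel hQ0 this).symm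

lemma antipode_antipode_eq_of_shift
    (hS : Function.Injective (antipode k : A →ₗ[k] A)) (hP : antipode k P = P)
    (hQ0 : Q ≠ 0) (hQ2 : Q * Q = Q)
    (h₁ : comul (R := k) Q * ((1 : A) ⊗ₜ[k] Q) = P ⊗ₜ Q)
    (h₂ : ((1 : A) ⊗ₜ[k] Q) * comul (R := k) Q = P ⊗ₜ Q) :
    antipode k (antipode k Q) = Q := by
  have key : ∀ u : A ⊗[k] A, TensorProduct.map (antipode k ∘ₗ antipode k) (antipode k)
      ((antipode k).lTensor A u * ((1 : A) ⊗ₜ[k] Q)) =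
      ((1 : A) ⊗ₜ[k] antipode k Q) * antipodeSwap k (antipodeSwap k u) := by
    intro u
    induction u with
    | zero => simp
    | add u₁ u₂ h₁ h₂ => simp only [map_add, add_mul, mul_add, h₁, h₂]
    | tmul a b => simp [antipode_mul_antidistrib]
  have hSQ : antipode k Q * antipode k Q = antipode k Q := by
    rw [← antipode_mul_antidistrib, hQ2]
  have hSQ0 : antipode k Q ≠ 0 := fun h => hQ0 (hS (by simpa using h))
  have e := key (comul P)
  rw [lTensor_antipode_comul_mul_of_shift h₁, ← comul_antipode_antipode, hP, hP] at e
  have e' := congrArg (· * ((1 : A) ⊗ₜ[k] antipode k Q)) e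
  simp only [mul_assoc, comul_mul_antipode_of_shift h₂] at e'
  simp only [TensorProduct.map_tmul, LinearMap.comp_apply, Algebra.TensorProduct.tmul_mul_tmul,
    mul_one, one_mul, hSQ] at e'
  exact tmul_right_cancel hSQ0 e'

/-- The map `(id ⊗ ρ) ∘ Δ` is left colinear. -/
lemma comul_convMul_functional (ρ : A →ₗ[k] k) (x : A) :
    comul (R := k) ((toConv LinearMap.id * toConv (Algebra.linearMap k A ∘ₗ ρ)).ofConv x) =
      (toConv LinearMap.id * toConv (Algebra.linearMap k A ∘ₗ ρ)).ofConv.lTensor A (comul x) := by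
  set L := (toConv LinearMap.id * toConv (Algebra.linearMap k A ∘ₗ ρ)).ofConv with hL
  have h₁ := LinearMap.algHom_comp_convMul_distrib (Bialgebra.comulAlgHom k A)
    (toConv LinearMap.id) (toConv (Algebra.linearMap k A ∘ₗ ρ))
  have h₂ := LinearMap.algHom_comp_convMul_distrib
    (Algebra.TensorProduct.includeRight : A →ₐ[k] A ⊗[k] A)
    (toConv LinearMap.id) (toConv (Algebra.linearMap k A ∘ₗ ρ))
  have h₃ := inclL_convMul_inclR_comp k L
  have e : (Bialgebra.comulAlgHom k A).toLinearMap ∘ₗ Algebra.linearMap k A ∘ₗ ρ =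
      (Algebra.TensorProduct.includeRight : A →ₐ[k] A ⊗[k] A).toLinearMap ∘ₗ
        Algebra.linearMap k A ∘ₗ ρ := by
    ext y
    simp [Algebra.TensorProduct.one_def, Algebra.algebraMap_eq_smul_one]
  rw [inclR, hL, h₂, toConv_ofConv, ← mul_assoc] at h₃
  have h₄ := inclL_convMul_inclR k (A := A)
  simp only [LinearMap.comp_id, e] at h₁ h₃
  rw [inclR] at h₄
  rw [h₄] at h₃
  have := h₁.trans (congrArg WithConv.ofConv h₃)
  exact LinearMap.congr_fun this x

lemma exists_left_shift
    (hP : antipode k P = P) (hQ : antipode k (antipode k Q) = Q) (hQ0 : Q ≠ 0)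
    (h₁ : comul (R := k) Q * ((1 : A) ⊗ₜ[k] Q) = P ⊗ₜ Q)
    (h₂ : ((1 : A) ⊗ₜ[k] Q) * comul (R := k) Q = P ⊗ₜ Q) :
    ∃ P' : A, comul (R := k) Q * (Q ⊗ₜ[k] (1 : A)) = Q ⊗ₜ P' ∧
      (Q ⊗ₜ[k] (1 : A)) * comul (R := k) Q = Q ⊗ₜ P' := by
  have ha := lTensor_antipode_comul_mul_of_shift h₁
  have hb := comul_mul_antipode_of_shift h₂
  have hd : comul (R := k) P * (Q ⊗ₜ[k] (1 : A)) = Q ⊗ₜ antipode k Q := by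
    have e : ∀ u : A ⊗[k] A, (antipode k).lTensor A (TensorProduct.comm k A A
        ((antipode k).lTensor A u * ((1 : A) ⊗ₜ[k] Q))) =
        antipodeSwap k u * (Q ⊗ₜ[k] (1 : A)) := by
      intro u
      induction u with
      | zero => simp
      | add u₁ u₂ h₁ h₂ => simp only [map_add, add_mul, h₁, h₂]
      | tmul a b => simp
    have := e (comul P)
    rw [ha, ← comul_antipode, hP] at this
    simpa using this.symm
  have hd' : (Q ⊗ₜ[k] (1 : A)) * comul (R := k) P = Q ⊗ₜ antipode k Q := by
    simpa [antipodeSwap_mul, ← comul_antipode, hP, hQ] using congrArg (antipodeSwap k) hb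
  obtain ⟨φ, hφ⟩ := Module.Projective.exists_dual_ne_zero k hQ0
  set ρ : A →ₗ[k] k := (φ Q)⁻¹ • (φ ∘ₗ LinearMap.mulRight k Q ∘ₗ antipode k) with hρ
  set L := (toConv LinearMap.id * toConv (Algebra.linearMap k A ∘ₗ ρ)).ofConv with hL
  have hLP : L P = Q := by
    have e : ∀ u : A ⊗[k] A, LinearMap.mul' k A (TensorProduct.map LinearMap.id
        (Algebra.linearMap k A ∘ₗ ρ) u) = (φ Q)⁻¹ • TensorProduct.rid k A (φ.lTensor A
          ((antipode k).lTensor A u * ((1 : A) ⊗ₜ[k] Q))) := by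
      intro u
      induction u with
      | zero => simp
      | add u₁ u₂ h₁ h₂ => simp only [map_add, add_mul, smul_add, h₁, h₂]
      | tmul a b =>
        simp [hρ, Algebra.algebraMap_eq_smul_one, smul_smul]
    have := e (comul P)
    rw [ha] at this
    exact this.trans (by simp [smul_smul, hφ])
  have hΔ : comul (R := k) Q = L.lTensor A (comul P) := by
    rw [← comul_convMul_functional, ← hL, hLP]
  refine ⟨L (antipode k Q), ?_, ?_⟩
  · have e : ∀ u : A ⊗[k] A, L.lTensor A u * (Q ⊗ₜ[k] (1 : A)) =
        L.lTensor A (u * (Q ⊗ₜ[k] (1 : A))) := by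
      intro u
      induction u with
      | zero => simp
      | add u₁ u₂ h₁ h₂ => simp only [map_add, add_mul, h₁, h₂]
      | tmul a b => simp
    rw [hΔ, e, hd, LinearMap.lTensor_tmul]
  · have e : ∀ u : A ⊗[k] A, (Q ⊗ₜ[k] (1 : A)) * L.lTensor A u =
        L.lTensor A ((Q ⊗ₜ[k] (1 : A)) * u) := by
      intro u
      induction u with
      | zero => simp
      | add u₁ u₂ h₁ h₂ => simp only [map_add, mul_add, h₁, h₂]
      | tmul a b => simp
    rw [hΔ, e, hd', LinearMap.lTensor_tmul]

lemma isLeftGroupLikeProjection_of_left_shift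
    (hQ0 : Q ≠ 0) (hQ2 : Q * Q = Q)
    (h₁ : comul (R := k) Q * (Q ⊗ₜ[k] (1 : A)) = Q ⊗ₜ P)
    (h₂ : (Q ⊗ₜ[k] (1 : A)) * comul (R := k) Q = Q ⊗ₜ P) :
    IsLeftGroupLikeProjection k P := by
  have hΔ2 : comul (R := k) Q * comul Q = comul Q := by
    rw [← Bialgebra.comul_mul, hQ2]
  let assoc := Algebra.TensorProduct.assoc k k k A A A
  let D := Algebra.TensorProduct.map (Bialgebra.comulAlgHom k A) (AlgHom.id k A)
  let E := Algebra.TensorProduct.map (AlgHom.id k A) (Bialgebra.comulAlgHom k A)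
  let q : A ⊗[k] (A ⊗[k] A) := Q ⊗ₜ[k] ((1 : A) ⊗ₜ[k] (1 : A))
  have hcoassoc : assoc (D (comul Q)) = E (comul Q) := coassoc_apply Q
  have hq : q = assoc ((Q ⊗ₜ[k] (1 : A)) ⊗ₜ[k] (1 : A)) := rfl
  refine ⟨?_, ?_, ?_, ?_⟩
  · rintro rfl
    have := mul_convMul_apply_of_mul_comul k h₂ LinearMap.id
      (1 : WithConv (A →ₗ[k] A)).ofConv (w := Q) (fun _ => rfl)
    exact hQ0 (by simpa [hQ2] using this)
  · apply tmul_left_cancel (k := k) hQ0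
    calc Q ⊗ₜ[k] (P * P) = (Q ⊗ₜ P) * (Q ⊗ₜ P) := by simp [hQ2]
      _ = (Q ⊗ₜ[k] (1 : A)) * (comul Q * comul Q) * (Q ⊗ₜ[k] (1 : A)) := by
        nth_rewrite 1 [← h₂]
        rw [← h₁]
        simp only [mul_assoc]
      _ = Q ⊗ₜ P := by rw [hΔ2, h₂]; simp [hQ2]
  · apply tmul_left_cancel (k := k) hQ0
    have e := congrArg (fun u => assoc (D u) * q) h₁
    have r : E (comul Q) * q = Q ⊗ₜ comul P := by
      simpa [E, q, Algebra.TensorProduct.one_def] using congrArg E h₁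
    have t (a : A) : assoc (comul Q ⊗ₜ a) * q = Q ⊗ₜ (P ⊗ₜ a) := by
      rw [hq, ← map_mul, Algebra.TensorProduct.tmul_mul_tmul, h₁, mul_one]
      rfl
    calc Q ⊗ₜ[k] (comul P * (P ⊗ₜ[k] (1 : A)))
        = E (comul Q) * q * ((1 : A) ⊗ₜ (P ⊗ₜ (1 : A))) := by rw [r]; simp
      _ = E (comul Q) * (assoc (comul Q ⊗ₜ (1 : A)) * q) := by rw [t, mul_assoc]; simp [q]
      _ = assoc (comul Q ⊗ₜ P) * q := by
        rw [← mul_assoc]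
        simpa [hcoassoc, D] using e
      _ = Q ⊗ₜ (P ⊗ₜ P) := t P
  · apply tmul_left_cancel (k := k) hQ0
    have e := congrArg (fun u => q * assoc (D u)) h₂
    have r : q * E (comul Q) = Q ⊗ₜ comul P := by
      simpa [E, q, Algebra.TensorProduct.one_def] using congrArg E h₂
    have t (a : A) : q * assoc (comul Q ⊗ₜ a) = Q ⊗ₜ (P ⊗ₜ a) := by
      rw [hq, ← map_mul, Algebra.TensorProduct.tmul_mul_tmul, h₂, one_mul]
      rfl
    calc Q ⊗ₜ[k] ((P ⊗ₜ[k] (1 : A)) * comul P)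
        = ((1 : A) ⊗ₜ (P ⊗ₜ (1 : A))) * (q * E (comul Q)) := by rw [r]; simp
      _ = q * assoc (comul Q ⊗ₜ (1 : A)) * E (comul Q) := by rw [t, ← mul_assoc]; simp [q]
      _ = q * assoc (comul Q ⊗ₜ P) := by
        rw [mul_assoc]
        simpa [hcoassoc, D] using e
      _ = Q ⊗ₜ (P ⊗ₜ P) := t P

end Shift

end HopfAlgebra

/-- Theorem: if `Q` is a right shift of the right group-like projection `P`, then `P` is
two-sided iff `S²(Q) = Q`, and in that case `Q` is a left shift of some two-sided
group-like projection `P̃`. -/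
theorem statement13
    (hS : Function.Bijective (HopfAlgebra.antipode (R := k) : A →ₗ[k] A))
    (P Q : A) (hP : IsRightGroupLikeProjection k P)
    (hQ0 : Q ≠ 0) (hQ2 : Q * Q = Q)
    (hshift1 : Coalgebra.comul (R := k) Q * ((1 : A) ⊗ₜ[k] Q) = P ⊗ₜ[k] Q)
    (hshift2 : ((1 : A) ⊗ₜ[k] Q) * Coalgebra.comul (R := k) Q = P ⊗ₜ[k] Q) :
    (IsTwoSidedGroupLikeProjection k P ↔
      HopfAlgebra.antipode (R := k) (HopfAlgebra.antipode (R := k) Q) = Q) ∧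
    (HopfAlgebra.antipode (R := k) (HopfAlgebra.antipode (R := k) Q) = Q →
      ∃ P' : A, IsTwoSidedGroupLikeProjection k P' ∧
        Coalgebra.comul (R := k) Q * (Q ⊗ₜ[k] (1 : A)) = Q ⊗ₜ[k] P' ∧
        (Q ⊗ₜ[k] (1 : A)) * Coalgebra.comul (R := k) Q = Q ⊗ₜ[k] P') := by
  have hSP (hQ : HopfAlgebra.antipode k (HopfAlgebra.antipode k Q) = Q) :
      HopfAlgebra.antipode k P = P :=
    hP.antipode_eq_s13 (HopfAlgebra.antipode_antipode_of_right_shift hQ0 hshift1 hQ)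
  refine ⟨⟨fun h => ?_, fun hQ => ⟨hP, hP.isLeft_of_antipode_eq (hSP hQ)⟩⟩, fun hQ => ?_⟩
  · exact HopfAlgebra.antipode_antipode_eq_of_shift hS.injective h.antipode_eq_s13 hQ0 hQ2
      hshift1 hshift2
  · obtain ⟨P', h₁, h₂⟩ := HopfAlgebra.exists_left_shift (hSP hQ) hQ hQ0 hshift1 hshift2
    have hL := HopfAlgebra.isLeftGroupLikeProjection_of_left_shift hQ0 hQ2 h₁ h₂
    have hP' := hL.antipode_eq_s13 (HopfAlgebra.antipode_antipode_of_left_shift hQ0 h₁ hQ)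
    exact ⟨P', ⟨hL.isRight_of_antipode_eq hP', hL⟩, h₁, h₂⟩
end
end
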